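/- arXiv:2111.01782 — 2 statements merged into one kernel-verified Lean document; each statement's English description precedes it below -/
import Mathlib

section
/- Let n ≥ 2, A ∈ ℤ^{m×n} of full column rank, b ∈ ℤ^m, c ∈ ℚⁿ. Let x* be an optimal vertex of the linear program max{cᵀx : Ax ≤ b}. If {x ∈ ℤⁿ : Ax ≤ b} is nonempty, then there exists an optimal solution z* of the integer program max{cᵀx : Ax ≤ b, x ∈ ℤⁿ} with ‖x* − z*‖_∞ < (n/2) · Δ_{n−1}(A), where Δ_{n−1}(A) is the maximum absolute value of an (n−1)×(n−1) minor of A. -/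
/-
Among the integer optima choose `z` with a minimal slack vector on the rows tight at the vertex
`x*`, and put `y = x* - z`. If a lattice vector `u` keeps `z + u` feasible and does not increase
those slacks, then `z + u` is optimal, so `u` leaves them unchanged and must be `0`: no nonzero
lattice vector is improving. By Minkowski's theorem for a thin symmetric body around `[-y, y]`,
this bounds each coordinate of `y`. The body lives in the coordinates of a basis of rows, and its
cross-section is controlled by the dimension of the smallest flat of the row arrangement
containing `y`. In dimension `2` the cross-section contains a cube and gives the bound `Δ`; in
dimension `3` a planar region of area at least `8 / 3` gives `3 / 2 * Δ`.

In higher dimension, walk along edges of the box spanned by `0` and `y` in slack space to write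
`y = u + (y - u)`, both parts again improving, with `u` in a flat of dimension `2` and `y - u` in a
flat of dimension smaller by `2`. Induction then gives `n / 2 * Δ`.
-/

open Matrix

/-- `maxMinor A k` is the largest absolute value of a `k × k` minor of `A`. -/
def maxMinor {m n : ℕ} (A : Matrix (Fin m) (Fin n) ℤ) (k : ℕ) : ℕ :=
  Finset.sup (Finset.univ.filter fun p : (Fin k → Fin m) × (Fin k → Fin n) =>
      Function.Injective p.1 ∧ Function.Injective p.2)
    fun p => ((A.submatrix p.1 p.2).det).natAbs

section Flats

variable {K E ι κ : Type*} [Field K] [AddCommGroup E] [Module K E]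

/-- The common kernel of the rows of `Θ` that are tight for the slack vector `r`. A point of a
polyhedron with constraint map `Θ` and slack `r` is a vertex exactly when this kernel is trivial. -/
def tightKer (Θ : E →ₗ[K] κ → K) (r : κ → K) : Submodule K E where
  carrier := {e | ∀ j, r j = 0 → Θ e j = 0}
  add_mem' ha hb j hj := by rw [map_add, Pi.add_apply, ha j hj, hb j hj, add_zero]
  zero_mem' j _ := by rw [map_zero, Pi.zero_apply]
  smul_mem' c a ha j hj := by rw [map_smul, Pi.smul_apply, ha j hj, smul_zero]

/-- The smallest intersection of hyperplanes `Φ · i = 0` that contains `u`. Its dimension measures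
how far `u` is from being a ray of the arrangement cut out by the rows of `Φ`. -/
def flat (Φ : E →ₗ[K] ι → K) (u : E) : Submodule K E := tightKer Φ (Φ u)

lemma mem_tightKer {Θ : E →ₗ[K] κ → K} {r : κ → K} {e : E} :
    e ∈ tightKer Θ r ↔ ∀ j, r j = 0 → Θ e j = 0 := Iff.rfl

lemma mem_flat {Φ : E →ₗ[K] ι → K} {u e : E} : e ∈ flat Φ u ↔ ∀ i, Φ u i = 0 → Φ e i = 0 :=
  Iff.rfl

lemma self_mem_flat (Φ : E →ₗ[K] ι → K) (u : E) : u ∈ flat Φ u := fun _ h ↦ h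

lemma flat_le_flat {Φ : E →ₗ[K] ι → K} {u v : E} (h : v ∈ flat Φ u) : flat Φ v ≤ flat Φ u :=
  fun _ he i hi ↦ he i (h i hi)

lemma flat_zero {Φ : E →ₗ[K] ι → K} (hΦ : Function.Injective Φ) : flat Φ 0 = ⊥ := by
  refine (Submodule.eq_bot_iff _).2 fun e he ↦ hΦ (funext fun i ↦ ?_)
  rw [map_zero]
  exact he i (by rw [map_zero, Pi.zero_apply])

lemma mem_span_singleton_of_finrank_le_one [FiniteDimensional K E] {W : Submodule K E}
    (hW : Module.finrank K W ≤ 1) {w e : E} (hw : w ∈ W) (hw0 : w ≠ 0) (he : e ∈ W) :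
    e ∈ Submodule.span K {w} := by
  rwa [Submodule.eq_of_le_of_finrank_le ((Submodule.span_singleton_le_iff_mem _ _).2 hw)
    (by rwa [finrank_span_singleton hw0])]

variable [LinearOrder K] [IsStrictOrderedRing K]

lemma left_mem_flat_add {Φ : E →ₗ[K] ι → K} {a b : E} (ha : 0 ≤ Φ a) (hb : 0 ≤ Φ b) :
    a ∈ flat Φ (a + b) := fun i hi ↦ by
  rw [map_add, Pi.add_apply] at hi
  exact ((add_eq_zero_iff_of_nonneg (ha i) (hb i)).1 hi).1

lemma flat_le_flat_add {Φ : E →ₗ[K] ι → K} {a b : E} (ha : 0 ≤ Φ a) (hb : 0 ≤ Φ b) :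
    flat Φ a ≤ flat Φ (a + b) :=
  flat_le_flat (left_mem_flat_add ha hb)

lemma finrank_flat_add_le [FiniteDimensional K E] {Φ : E →ₗ[K] ι → K} {a b : E} (ha : 0 ≤ Φ a)
    (hb : 0 ≤ Φ b) :
    Module.finrank K (flat Φ a) + Module.finrank K (flat Φ b) ≤
      Module.finrank K (flat Φ (a + b)) + Module.finrank K ↥(flat Φ a ⊓ flat Φ b) := by
  rw [← Submodule.finrank_sup_add_finrank_inf_eq]
  gcongr
  exact Submodule.finrank_mono
    (sup_le (flat_le_flat_add ha hb) (add_comm b a ▸ flat_le_flat_add hb ha))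

end Flats

section Pivoting

variable {K E ι κ : Type*} [Field K] [LinearOrder K] [IsStrictOrderedRing K]
  [AddCommGroup E] [Module K E]

lemma ratio_test [Finite κ] {g s : κ → K} (hg : 0 ≤ g) (h0 : ∀ j, g j = 0 → 0 ≤ s j)
    (hneg : ∃ j, s j < 0) :
    ∃ t, 0 < t ∧ 0 ≤ g + t • s ∧ ∃ j, s j < 0 ∧ g j + t * s j = 0 := by
  obtain ⟨j₀, hj₀, hmin⟩ := Set.exists_min_image {j | s j < 0} (fun j ↦ g j / -s j)
    (Set.toFinite _) hneg
  have hj₀' : 0 < -s j₀ := neg_pos.2 hj₀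
  have hpos : 0 < g j₀ / -s j₀ :=
    div_pos ((hg j₀).lt_of_ne fun h ↦ (h0 j₀ h.symm).not_gt hj₀) hj₀'
  refine ⟨g j₀ / -s j₀, hpos, fun j ↦ ?_, j₀, hj₀, ?_⟩
  · change 0 ≤ g j + g j₀ / -s j₀ * s j
    rcases lt_or_ge (s j) 0 with hj | hj
    · linarith [(le_div_iff₀ (neg_pos.2 hj)).1 (hmin j hj)]
    · exact add_nonneg (hg j) (mul_nonneg hpos.le hj)
  · linarith [div_mul_cancel₀ (g j₀) hj₀'.ne']

variable [FiniteDimensional K E]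

lemma exists_flat_lt [Finite κ] {Ψ : E →ₗ[K] κ → K} (hΨ : Function.Injective Ψ) (σ : E →ₗ[K] K)
    {w : E} (hw : 0 ≤ Ψ w) (hdim : 1 < Module.finrank K (flat Ψ w)) :
    ∃ w', 0 ≤ Ψ w' ∧ σ w' = σ w ∧ flat Ψ w' < flat Ψ w := by
  obtain ⟨e, he, hσe, j₁, hj₁⟩ : ∃ e ∈ flat Ψ w, σ e = 0 ∧ ∃ j, Ψ e j < 0 := by
    obtain ⟨⟨e, he⟩, hker, hne⟩ := (Submodule.ne_bot_iff _).1 <|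
      LinearMap.ker_ne_bot_of_finrank_lt (f := σ.domRestrict (flat Ψ w)) <| by
        rwa [Module.finrank_self]
    have hσe : σ e = 0 := hker
    obtain ⟨j, hj⟩ : ∃ j, Ψ e j ≠ 0 := Function.ne_iff.1 fun h ↦
      hne (Subtype.ext (hΨ (h.trans (map_zero Ψ).symm)))
    rcases hj.lt_or_gt with hj | hj
    · exact ⟨e, he, hσe, j, hj⟩
    · exact ⟨-e, neg_mem he, by rw [map_neg, hσe, neg_zero], j, by simpa using hj⟩
  obtain ⟨t, -, hpos, j₀, hj₀, hzero⟩ := ratio_test hw (fun j hj ↦ (he j hj).ge) ⟨j₁, hj₁⟩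
  refine ⟨w + t • e, by rwa [map_add, map_smul],
    by rw [map_add, map_smul, hσe, smul_zero, add_zero],
    (flat_le_flat (add_mem (self_mem_flat Ψ w) (Submodule.smul_mem _ t he))).lt_of_ne fun h ↦ ?_⟩
  have : e ∈ flat Ψ (w + t • e) := h ▸ he
  exact hj₀.ne (this j₀ (by rw [map_add, map_smul]; exact hzero))

lemma exists_finrank_flat_le_one [Finite κ] {Ψ : E →ₗ[K] κ → K} (hΨ : Function.Injective Ψ)
    (σ : E →ₗ[K] K) {w : E} (hw : 0 ≤ Ψ w) (hσ : 0 < σ w) :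
    ∃ w', 0 ≤ Ψ w' ∧ 0 < σ w' ∧ Module.finrank K (flat Ψ w') ≤ 1 := by
  induction hd : Module.finrank K (flat Ψ w) using Nat.strong_induction_on generalizing w with
  | _ d ih =>
    rcases le_or_gt d 1 with h1 | h1
    · exact ⟨w, hw, hσ, hd.trans_le h1⟩
    · obtain ⟨w', hw', hσ', hlt⟩ := exists_flat_lt hΨ σ hw (hd ▸ h1)
      exact ih _ (hd ▸ Submodule.finrank_lt_finrank_of_lt hlt) hw' (hσ' ▸ hσ) rfl

/- A simplex pivot in terms of slack vectors: from a vertex with slack `r` and an improving feasible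
direction `d`, one reaches an adjacent vertex with slack `r + Θ w`. The midpoint of the edge has
slack proportional to `r + (r + Θ w)`. -/
lemma exists_adjacent_vertex [Finite κ] {Θ : E →ₗ[K] κ → K} {r : κ → K} (hr : 0 ≤ r)
    (hvert : tightKer Θ r = ⊥) (σ : E →ₗ[K] K) (hbdd : ∀ w, 0 < σ w → ∃ j, Θ w j < 0)
    {d : E} (hd : ∀ j, r j = 0 → 0 ≤ Θ d j) (hσd : 0 < σ d) :
    ∃ w, 0 < σ w ∧ 0 ≤ r + Θ w ∧ tightKer Θ (r + Θ w) = ⊥ ∧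
      Module.finrank K (tightKer Θ (r + (r + Θ w))) ≤ 1 := by
  let Ψ : E →ₗ[K] {j // r j = 0} → K := LinearMap.funLeft K K Subtype.val ∘ₗ Θ
  have hΨ : Function.Injective Ψ := by
    refine (injective_iff_map_eq_zero Ψ).2 fun e he ↦ ?_
    rw [← Submodule.mem_bot K, ← hvert]
    exact fun j hj ↦ congrFun he ⟨j, hj⟩
  obtain ⟨w, hw, hσw, hdim⟩ := exists_finrank_flat_le_one hΨ σ (w := d) (fun j ↦ hd j j.2) hσd
  obtain ⟨t, ht, hpos, j₀, hj₀, hzero⟩ :=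
    ratio_test hr (s := Θ w) (fun j hj ↦ hw ⟨j, hj⟩) (hbdd w hσw)
  have hedge : tightKer Θ (r + (r + Θ (t • w))) ≤ flat Ψ w := fun e he j hj ↦ he j (by
    have hj' : Θ w j = 0 := hj
    simp only [map_smul, Pi.add_apply, Pi.smul_apply, j.2, hj', smul_zero, add_zero])
  have hpos' : 0 ≤ r + Θ (t • w) := by rwa [map_smul]
  refine ⟨t • w, ?_, hpos', ?_, (Submodule.finrank_mono hedge).trans hdim⟩
  · rw [map_smul]
    exact smul_pos ht hσw
  · refine (Submodule.eq_bot_iff _).2 fun e he ↦ ?_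
    have hw0 : w ≠ 0 := fun h ↦ by simp [h] at hσw
    have hmem : e ∈ flat Ψ w := hedge fun j hj ↦
      he j ((add_eq_zero_iff_of_nonneg (hr j) (hpos' j)).1 hj).2
    obtain ⟨c, rfl⟩ := Submodule.mem_span_singleton.1
      (mem_span_singleton_of_finrank_le_one hdim (self_mem_flat Ψ w) hw0 hmem)
    have hc : c * Θ w j₀ = 0 := by
      simpa only [map_smul, Pi.smul_apply, smul_eq_mul] using
        he j₀ (by rw [map_smul]; exact hzero)
    rw [(mul_eq_zero.1 hc).resolve_right hj₀.ne, zero_smul]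

end Pivoting

section Boxes

variable {K E ι : Type*} [Field K] [LinearOrder K] [AddCommGroup E] [Module K E]

/-- `v` is a vertex of the box `{v | 0 ≤ Φ v ≤ Φ y}`: it lies in the box, and no direction is
parallel to all the facets through it. -/
def IsBoxVertex (Φ : E →ₗ[K] ι → K) (y v : E) : Prop :=
  0 ≤ Φ v ∧ 0 ≤ Φ (y - v) ∧ flat Φ v ⊓ flat Φ (y - v) = ⊥

lemma isBoxVertex_zero {Φ : E →ₗ[K] ι → K} (hΦ : Function.Injective Φ) {y : E} (hy : 0 ≤ Φ y) :
    IsBoxVertex Φ y 0 :=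
  ⟨(map_zero Φ).ge, by rwa [sub_zero], by rw [flat_zero hΦ, bot_inf_eq]⟩

lemma finite_setOf_isBoxVertex [Finite ι] (Φ : E →ₗ[K] ι → K) (y : E) :
    {v | IsBoxVertex Φ y v}.Finite := by
  refine Set.Finite.of_injOn (t := Set.univ)
    (f := fun v ↦ ({i | Φ v i = 0}, {i | Φ (y - v) i = 0})) (fun _ _ ↦ Set.mem_univ _)
    (fun v hv v' _ h ↦ ?_) Set.finite_univ
  simp only [Prod.mk.injEq, Set.ext_iff, Set.mem_ofPred_eq] at h
  have hmem : v - v' ∈ flat Φ v ⊓ flat Φ (y - v) := by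
    refine ⟨fun i hi ↦ ?_, fun i hi ↦ ?_⟩
    · rw [map_sub, Pi.sub_apply, hi, (h.1 i).1 hi, sub_zero]
    · rw [← sub_sub_sub_cancel_left v' v y, map_sub, Pi.sub_apply, (h.2 i).1 hi, hi, sub_zero]
  rw [hv.2.2, Submodule.mem_bot] at hmem
  exact sub_eq_zero.1 hmem

variable [IsStrictOrderedRing K]

lemma sum_apply_pos [Fintype ι] {Φ : E →ₗ[K] ι → K} (hΦ : Function.Injective Φ) {a : E}
    (ha : 0 ≤ Φ a) (hne : a ≠ 0) : 0 < ∑ i, Φ a i :=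
  Fintype.sum_pos (ha.lt_of_ne fun h ↦ hne (hΦ (h.symm.trans (map_zero Φ).symm)))

variable [FiniteDimensional K E]

lemma IsBoxVertex.exists_adjacent [Fintype ι] {Φ : E →ₗ[K] ι → K} (hΦ : Function.Injective Φ)
    {y v : E} (hv : IsBoxVertex Φ y v) (hne : v ≠ y) :
    ∃ v', IsBoxVertex Φ y v' ∧ ∑ i, Φ v i < ∑ i, Φ v' i ∧
      Module.finrank K ↥(flat Φ (v + v') ⊓ flat Φ ((y - v) + (y - v'))) ≤ 1 := by
  obtain ⟨hv0, hvy, hvert⟩ := hv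
  let σ : E →ₗ[K] K := ∑ i, LinearMap.proj i ∘ₗ Φ
  have hσ (w : E) : σ w = ∑ i, Φ w i := by simp [σ]
  let Θ : E →ₗ[K] ι ⊕ ι → K :=
    LinearMap.pi (Sum.elim (fun i ↦ LinearMap.proj i ∘ₗ Φ) (fun i ↦ -(LinearMap.proj i ∘ₗ Φ)))
  have hker (a b : E) : tightKer Θ (Sum.elim (Φ a) (Φ b)) = flat Φ a ⊓ flat Φ b := by
    ext e
    simp [mem_tightKer, mem_flat, Θ]
  have hslack (w : E) : Sum.elim (Φ v) (Φ (y - v)) + Θ w =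
      Sum.elim (Φ (v + w)) (Φ (y - (v + w))) := by
    ext (i | i)
    · simp [Θ]
    · simp only [Pi.add_apply, Sum.elim_inr, map_sub, Pi.sub_apply, map_add, Θ, LinearMap.pi_apply,
        LinearMap.neg_apply, LinearMap.comp_apply, LinearMap.proj_apply]
      ring
  have hbdd (w : E) (hw : 0 < σ w) : ∃ j, Θ w j < 0 := by
    obtain ⟨i, -, hi⟩ := Finset.exists_ne_zero_of_sum_ne_zero ((hσ w).symm.trans_ne hw.ne')
    rcases hi.lt_or_gt with h | h
    · exact ⟨.inl i, h⟩
    · exact ⟨.inr i, neg_neg_of_pos h⟩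
  obtain ⟨w, hσw, hpos, hvert', hdim⟩ := exists_adjacent_vertex
    (r := Sum.elim (Φ v) (Φ (y - v))) (Sum.rec hv0 hvy) (by rw [hker, hvert]) σ hbdd (d := y - v)
    (Sum.rec (fun i _ ↦ hvy i) fun i (hi : Φ (y - v) i = 0) ↦ (neg_eq_zero.2 hi).ge)
    (by rw [hσ]; exact sum_apply_pos hΦ hvy (sub_ne_zero.2 hne.symm))
  rw [hslack] at hpos hvert' hdim
  have hmid : Sum.elim (Φ v) (Φ (y - v)) + Sum.elim (Φ (v + w)) (Φ (y - (v + w))) =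
      Sum.elim (Φ (v + (v + w))) (Φ ((y - v) + (y - (v + w)))) := by
    rw [map_add Φ v (v + w), map_add Φ (y - v)]
    exact Sum.elim_add_add _ _ _ _ |>.symm
  rw [hker] at hvert'
  rw [hmid, hker] at hdim
  refine ⟨v + w, ⟨fun i ↦ hpos (.inl i), fun i ↦ hpos (.inr i), hvert'⟩, ?_, hdim⟩
  rw [← hσ, ← hσ, map_add]
  exact lt_add_of_pos_right _ hσw

lemma exists_flat_decomposition_of_nonneg [Finite ι] {Φ : E →ₗ[K] ι → K}
    (hΦ : Function.Injective Φ) {y : E} (hy : 0 ≤ Φ y) {k : ℕ}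
    (hk : Module.finrank K (flat Φ y) ≤ k + 2) :
    ∃ u, 0 ≤ Φ u ∧ 0 ≤ Φ (y - u) ∧
      Module.finrank K (flat Φ u) ≤ 2 ∧ Module.finrank K (flat Φ (y - u)) ≤ k := by
  rcases le_or_gt (Module.finrank K (flat Φ y)) 2 with h2 | h2
  · refine ⟨y, hy, by rw [sub_self, map_zero], h2, ?_⟩
    rw [sub_self, flat_zero hΦ, finrank_bot]
    exact k.zero_le
  have := Fintype.ofFinite ι
  obtain ⟨v, ⟨hv, hv1⟩, hmax⟩ := Set.exists_max_image
    {v | IsBoxVertex Φ y v ∧ Module.finrank K (flat Φ v) ≤ 1} (fun v ↦ ∑ i, Φ v i)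
    ((finite_setOf_isBoxVertex Φ y).subset fun _ h ↦ h.1)
    ⟨0, isBoxVertex_zero hΦ hy, by rw [flat_zero hΦ, finrank_bot]; exact zero_le_one⟩
  obtain ⟨v', hv', hlt, hdim⟩ := hv.exists_adjacent hΦ (by rintro rfl; omega)
  have hv'2 : 2 ≤ Module.finrank K (flat Φ v') :=
    not_lt.1 fun h ↦ (hmax v' ⟨hv', Nat.lt_succ_iff.1 h⟩).not_gt hlt
  have hsplit := finrank_flat_add_le hv'.1 hv'.2.1
  rw [hv'.2.2, finrank_bot, add_sub_cancel] at hsplit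
  have hmid := finrank_flat_add_le (Φ := Φ) (a := v + v') (b := y - v + (y - v'))
    (by rw [map_add]; exact add_nonneg hv.1 hv'.1)
    (by rw [map_add]; exact add_nonneg hv.2.1 hv'.2.1)
  have hleft := Submodule.finrank_mono (add_comm v' v ▸ flat_le_flat_add hv'.1 hv.1)
  have hright := Submodule.finrank_mono (flat_le_flat_add hv.2.1 hv'.2.1)
  have hwhole : Module.finrank K (flat Φ (v + v' + (y - v + (y - v')))) ≤
      Module.finrank K (flat Φ y) := by
    rw [show v + v' + (y - v + (y - v')) = y + y by abel]
    exact Submodule.finrank_mono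
      (flat_le_flat (add_mem (self_mem_flat Φ y) (self_mem_flat Φ y)))
  rcases hv'2.eq_or_lt with h2 | h3
  · exact ⟨v', hv'.1, hv'.2.1, h2.ge, by omega⟩
  · exact ⟨v, hv.1, hv.2.1, by omega, by omega⟩

lemma exists_flat_decomposition [Finite ι] {Φ : E →ₗ[K] ι → K} (hΦ : Function.Injective Φ)
    (y : E) {k : ℕ} (hk : Module.finrank K (flat Φ y) ≤ k + 2) :
    ∃ u, (∀ i, Φ u i ∈ Set.uIcc 0 (Φ y i)) ∧
      Module.finrank K (flat Φ u) ≤ 2 ∧ Module.finrank K (flat Φ (y - u)) ≤ k := by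
  let ε : ι → K := fun i ↦ if 0 ≤ Φ y i then 1 else -1
  have hε (i : ι) : ε i ≠ 0 := by dsimp only [ε]; split_ifs <;> norm_num
  let Ψ : E →ₗ[K] ι → K := LinearMap.pi fun i ↦ ε i • (LinearMap.proj i ∘ₗ Φ)
  have hΨ (e : E) (i : ι) : Ψ e i = ε i * Φ e i := rfl
  have hzero (e : E) (i : ι) : Ψ e i = 0 ↔ Φ e i = 0 := by
    rw [hΨ, mul_eq_zero, or_iff_right (hε i)]
  have hflat (u : E) : flat Ψ u = flat Φ u := by
    ext e
    simp only [mem_flat, hzero]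
  have hinj : Function.Injective Ψ := (injective_iff_map_eq_zero Ψ).2 fun e he ↦
    (injective_iff_map_eq_zero Φ).1 hΦ e (funext fun i ↦ (hzero e i).1 (congrFun he i))
  have hy : 0 ≤ Ψ y := fun i ↦ by
    rw [Pi.zero_apply, hΨ]
    dsimp only [ε]
    split_ifs <;> linarith
  obtain ⟨u, hu, hyu, h2, hk'⟩ := exists_flat_decomposition_of_nonneg hinj hy (hflat y ▸ hk)
  refine ⟨u, fun i ↦ ?_, hflat u ▸ h2, hflat (y - u) ▸ hk'⟩
  have hui := hu i
  have hyui := hyu i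
  rw [Pi.zero_apply, hΨ] at hui hyui
  rw [map_sub, Pi.sub_apply] at hyui
  dsimp only [ε] at hui hyui
  rw [Set.mem_uIcc]
  split_ifs at hui hyui
  · exact .inl ⟨by linarith, by linarith⟩
  · exact .inr ⟨by linarith, by linarith⟩

end Boxes

section RowSelection

variable {K ι κ : Type*} [Fintype κ]

lemma submatrix_mulVec_eq_mulVec_extend {κ' : Type*} [Semiring K] [Fintype κ']
    (M : Matrix ι κ' K) {e : κ → κ'} (he : Function.Injective e) (v : κ → K) :
    M.submatrix id e *ᵥ v = M *ᵥ Function.extend e v 0 := by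
  ext i
  refine Fintype.sum_of_injective e he _ _ (fun a ha ↦ ?_) fun p ↦ ?_
  · rw [Function.extend_apply' _ _ _ ha, Pi.zero_apply, mul_zero]
  · rw [he.extend_apply]
    rfl

lemma mulVec_submatrix_injective {κ' : Type*} [Field K] [Fintype κ'] {M : Matrix ι κ' K}
    (hM : Function.Injective M.mulVec) {e : κ → κ'} (he : Function.Injective e) :
    Function.Injective (M.submatrix id e).mulVec :=
  mulVec_injective_iff.2 ((mulVec_injective_iff.1 hM).comp e he)

lemma finrank_tightKer_submatrix_lt {κ' : Type*} [Field K] [Fintype κ'] (M : Matrix ι κ' K)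
    {e : κ → κ'} (he : Function.Injective e) {q : κ'} (hq : q ∉ Set.range e) {y : κ' → K}
    (hy : y q ≠ 0) :
    Module.finrank K (tightKer (M.submatrix id e).mulVecLin (M *ᵥ y)) <
      Module.finrank K (flat M.mulVecLin y) := by
  let ext := Function.ExtendByZero.linearMap K e
  have hext : Function.Injective ext := fun v w h ↦ funext fun p ↦ by
    simpa only [ext, Function.ExtendByZero.linearMap_apply, he.extend_apply] using congrFun h (e p)
  rw [LinearEquiv.finrank_eq (Submodule.equivMapOfInjective ext hext _)]
  refine Submodule.finrank_lt_finrank_of_lt (SetLike.lt_iff_le_and_exists.2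
    ⟨?_, y, self_mem_flat _ y, ?_⟩)
  · rintro _ ⟨v, hv, rfl⟩ i hi
    exact (congrFun (submatrix_mulVec_eq_mulVec_extend M he v) i).symm.trans (hv i hi)
  · rintro ⟨v, -, rfl⟩
    exact hy (Function.extend_apply' _ _ _ hq)

lemma dotProduct_eq_zero_of_mem_span [CommSemiring K] {s : Set (κ → K)} {v : κ → K}
    (h : ∀ a ∈ s, a ⬝ᵥ v = 0) {a : κ → K} (ha : a ∈ Submodule.span K s) : a ⬝ᵥ v = 0 := by
  induction ha using Submodule.span_induction with
  | mem a ha => exact h a ha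
  | zero => exact zero_dotProduct v
  | add a b _ _ ha hb => rw [add_dotProduct, ha, hb, add_zero]
  | smul c a _ ha => rw [smul_dotProduct, ha, smul_zero]

lemma card_le_finrank_tightKer [Field K] {M : Matrix ι κ K} {r : ι → K} {j : κ → ι} {F : Finset κ}
    (h : ∀ i, r i = 0 → M.row i ∈ Submodule.span K ((fun p ↦ M.row (j p)) '' {p | p ∉ F})) :
    F.card ≤ Module.finrank K (tightKer M.mulVecLin r) := by
  classical
  let N : Matrix {p // p ∉ F} κ K := M.submatrix (fun p ↦ j p) id
  have hker : LinearMap.ker N.mulVecLin ≤ tightKer M.mulVecLin r := fun v hv i hi ↦ by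
    refine dotProduct_eq_zero_of_mem_span ?_ (h i hi)
    rintro _ ⟨p, hp, rfl⟩
    exact congrFun hv ⟨p, hp⟩
  have hnullity := N.mulVecLin.finrank_range_add_finrank_ker
  have hrank : Module.finrank K (LinearMap.range N.mulVecLin) ≤ Fintype.card {p // p ∉ F} :=
    N.rank_le_card_height
  have hcard : F.card ≤ Fintype.card κ := F.card_le_univ
  have hmono := Submodule.finrank_mono hker
  rw [Module.finrank_fintype_fun_eq_card] at hnullity
  rw [Fintype.card_subtype_compl, Fintype.card_coe] at hrank
  omega

variable [DecidableEq κ]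

lemma exists_submatrix_det_ne_zero [Field K] {M : Matrix ι κ K}
    (hM : Function.Injective M.mulVec) (r : ι → K) :
    ∃ F : Finset κ, ∃ j : κ → ι, F.card ≤ Module.finrank K (tightKer M.mulVecLin r) ∧
      (∀ p ∉ F, r (j p) = 0) ∧ (M.submatrix j id).det ≠ 0 := by
  classical
  have hrows : Submodule.span K (Set.range M.row) = ⊤ :=
    span_flip_eq_top_iff_linearIndependent.2 (mulVec_injective_iff.1 hM)
  let hS₀ := linearIndepOn_empty K M.row
  let S := hS₀.extend (Set.empty_subset {i | r i = 0})
  let hS := hS₀.linearIndepOn_extend (Set.empty_subset {i | r i = 0})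
  let T := hS.extend (Set.subset_univ _)
  have hT : LinearIndepOn K M.row T := hS.linearIndepOn_extend (Set.subset_univ _)
  let b : Module.Basis T K (κ → K) := .mk hT <| by
    have hspan := hS.span_image_extend_eq_span_image (Set.subset_univ _)
    rw [Set.image_univ, hrows, Set.image_eq_range] at hspan
    exact hspan.ge
  let e : κ ≃ T := (Pi.basisFun K κ).indexEquiv b
  have hdet : IsUnit (M.submatrix (fun p ↦ (e p : ι)) id) :=
    linearIndependent_rows_iff_isUnit.1 (LinearIndependent.comp hT e e.injective)
  refine ⟨Finset.univ.filter fun p ↦ (e p : ι) ∉ S, fun p ↦ e p, ?_, fun p hp ↦ ?_,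
    ((isUnit_iff_isUnit_det _).1 hdet).ne_zero⟩
  · refine card_le_finrank_tightKer (j := fun p ↦ (e p : ι)) fun i hi ↦ ?_
    refine Submodule.span_mono ?_ (hS₀.image_subset_span_image_extend
      (Set.empty_subset {i | r i = 0}) (Set.mem_image_of_mem _ hi))
    rintro _ ⟨i', hi', rfl⟩
    obtain ⟨p, hp⟩ := e.surjective ⟨i', hS.subset_extend (Set.subset_univ _) hi'⟩
    have hpi : (e p : ι) = i' := congrArg Subtype.val hp
    exact ⟨p, by simpa [hpi] using hi', congrArg M.row hpi⟩
  · exact hS₀.extend_subset (Set.empty_subset {i | r i = 0}) (by simpa using hp)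

lemma mul_inv_submatrix_eq_one [CommRing K] {M : Matrix ι κ K} {j : κ → ι}
    (hdet : IsUnit (M.submatrix j id).det) : (M * (M.submatrix j id)⁻¹).submatrix j id = 1 := by
  rw [submatrix_mul _ _ j id id Function.bijective_id, submatrix_id_id, mul_nonsing_inv _ hdet]

end RowSelection

section RowReplacement

variable {K κ : Type*} [CommRing K] [Fintype κ] [DecidableEq κ]

lemma det_updateRow_one (p : κ) (c : κ → K) : ((1 : Matrix κ κ K).updateRow p c).det = c p := by
  rw [← det_transpose, ← updateCol_transpose, transpose_one, ← cramer_apply, cramer_one,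
    Module.End.one_apply]

lemma det_updateRow_updateRow_one {s t : κ} (hst : s ≠ t) (c d : κ → K) :
    (((1 : Matrix κ κ K).updateRow s c).updateRow t d).det = c s * d t - c t * d s := by
  let V : Matrix (Fin 2) κ K := of ![c - Pi.single s 1, d - Pi.single t 1]
  have hupdate : ((1 : Matrix κ κ K).updateRow s c).updateRow t d =
      1 + (1 : Matrix κ κ K).submatrix id ![s, t] * V := by
    ext i p
    rw [Matrix.add_apply, mul_apply, Fin.sum_univ_two]
    rcases eq_or_ne i t with rfl | hit
    · simp [V, hst.symm, one_apply, Pi.single_apply, eq_comm]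
    rcases eq_or_ne i s with rfl | his
    · simp [V, hit, one_apply, Pi.single_apply, eq_comm]
    · simp [V, hit, his, one_apply]
  have hswap : V * (1 : Matrix κ κ K).submatrix id ![s, t] = V.submatrix id ![s, t] := by
    rw [← submatrix_id_id V, ← submatrix_mul _ _ _ _ _ Function.bijective_id, Matrix.mul_one,
      submatrix_submatrix, Function.id_comp]
    rfl
  rw [hupdate, det_one_add_mul_comm, hswap, det_fin_two]
  simp [V, hst, hst.symm]

lemma submatrix_update_left {R ι κ κ' : Type*} [DecidableEq κ'] (M : Matrix ι κ R) (j : κ' → ι)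
    (p : κ') (i : ι) :
    M.submatrix (Function.update j p i) id = (M.submatrix j id).updateRow p (M i) := by
  ext p' q
  rcases eq_or_ne p' p with rfl | hp
  · rw [submatrix_apply, Function.update_self, updateRow_self, id]
  · rw [submatrix_apply, Function.update_of_ne hp, updateRow_ne hp, submatrix_apply]

end RowReplacement

section MaximalRowBasis

variable {K ι κ : Type*} [Field K] [LinearOrder K] [Fintype κ] [DecidableEq κ]

/-- The rows `j` of `M` form a basis, and `|det|` is maximal among all families of rows that, like
`j`, take the positions outside `F` from the zero set of `r`. -/
structure IsMaximalRowBasis (M : Matrix ι κ K) (r : ι → K) (F : Finset κ) (j : κ → ι) : Prop where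
  apply_eq_zero : ∀ p ∉ F, r (j p) = 0
  det_ne_zero : (M.submatrix j id).det ≠ 0
  abs_det_le : ∀ j' : κ → ι, (∀ p ∉ F, r (j' p) = 0) →
    |(M.submatrix j' id).det| ≤ |(M.submatrix j id).det|

variable [IsStrictOrderedRing K]

lemma exists_isMaximalRowBasis [Finite ι] {M : Matrix ι κ K}
    (hM : Function.Injective M.mulVec) (r : ι → K) :
    ∃ F : Finset κ, F.card ≤ Module.finrank K (tightKer M.mulVecLin r) ∧
      ∃ j : κ → ι, IsMaximalRowBasis M r F j := by
  obtain ⟨F, j₀, hF, hj₀, hdet⟩ := exists_submatrix_det_ne_zero hM r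
  obtain ⟨j, hj, hmax⟩ := Set.exists_max_image {j : κ → ι | ∀ p ∉ F, r (j p) = 0}
    (fun j ↦ |(M.submatrix j id).det|) (Set.toFinite _) ⟨j₀, hj₀⟩
  exact ⟨F, hF, j, hj, abs_pos.1 ((abs_pos.2 hdet).trans_le (hmax j₀ hj₀)), hmax⟩

variable {M : Matrix ι κ K} {r : ι → K} {F : Finset κ} {j : κ → ι}

namespace IsMaximalRowBasis

lemma abs_det_submatrix_mul_inv_le_one (h : IsMaximalRowBasis M r F j) {j' : κ → ι}
    (hj' : ∀ p ∉ F, r (j' p) = 0) : |((M * (M.submatrix j id)⁻¹).submatrix j' id).det| ≤ 1 := by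
  rw [submatrix_mul _ _ j' id id Function.bijective_id, submatrix_id_id, det_mul, det_nonsing_inv,
    Ring.inverse_eq_inv', abs_mul, abs_inv, ← div_eq_mul_inv]
  exact div_le_one_of_le₀ (h.abs_det_le j' hj') (abs_nonneg _)

lemma abs_mul_inv_apply_le_one (h : IsMaximalRowBasis M r F j) {p : κ} (hp : p ∈ F) (i : ι) :
    |(M * (M.submatrix j id)⁻¹) i p| ≤ 1 := by
  have hdet := h.abs_det_submatrix_mul_inv_le_one (j' := Function.update j p i) fun p' hp' ↦ by
    rw [Function.update_of_ne (ne_of_mem_of_not_mem hp hp').symm]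
    exact h.apply_eq_zero p' hp'
  rwa [submatrix_update_left, mul_inv_submatrix_eq_one h.det_ne_zero.isUnit,
    det_updateRow_one] at hdet

lemma abs_mul_inv_minor_le_one (h : IsMaximalRowBasis M r F j) {s t : κ} (hst : s ≠ t)
    (hs : s ∈ F) (ht : t ∈ F) (i i' : ι) :
    |(M * (M.submatrix j id)⁻¹) i s * (M * (M.submatrix j id)⁻¹) i' t -
      (M * (M.submatrix j id)⁻¹) i t * (M * (M.submatrix j id)⁻¹) i' s| ≤ 1 := by
  have hdet := h.abs_det_submatrix_mul_inv_le_one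
    (j' := Function.update (Function.update j s i) t i') fun p hp ↦ by
      rw [Function.update_of_ne (ne_of_mem_of_not_mem ht hp).symm,
        Function.update_of_ne (ne_of_mem_of_not_mem hs hp).symm]
      exact h.apply_eq_zero p hp
  rwa [submatrix_update_left, submatrix_update_left, mul_inv_submatrix_eq_one h.det_ne_zero.isUnit,
    det_updateRow_updateRow_one hst] at hdet

end IsMaximalRowBasis

end MaximalRowBasis

section Minkowski

open MeasureTheory

lemma exists_int_ne_zero_mem_of_two_pow_lt_volume {ι : Type*} [Fintype ι] {S : Set (ι → ℝ)}
    (hsymm : ∀ x ∈ S, -x ∈ S) (hconv : Convex ℝ S) (hvol : 2 ^ Fintype.card ι < volume S) :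
    ∃ u : ι → ℤ, u ≠ 0 ∧ (fun i ↦ (u i : ℝ)) ∈ S := by
  classical
  let L := Submodule.span ℤ (Set.range (Pi.basisFun ℝ ι))
  have : Countable L.toAddSubgroup := inferInstanceAs (Countable L)
  obtain ⟨x, hx0, hxS⟩ := exists_ne_zero_mem_lattice_of_measure_mul_two_pow_lt_measure
    (ZSpan.isAddFundamentalDomain (Pi.basisFun ℝ ι) volume) hsymm hconv (L := L.toAddSubgroup) <| by
      simpa [ZSpan.fundamentalDomain_pi_basisFun, Real.volume_pi_Ico] using hvol
  choose u hu using ((Pi.basisFun ℝ ι).mem_span_iff_repr_mem ℤ x.1).1 x.2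
  have hux : (fun i ↦ (u i : ℝ)) = x := funext hu
  refine ⟨u, ?_, hux ▸ hxS⟩
  rintro rfl
  exact hx0 (Subtype.ext (hux.symm.trans (funext fun _ ↦ Int.cast_zero)))

lemma exists_int_ne_zero_shear_mem {n : ℕ} (q : Fin (n + 1)) (a : Fin n → ℝ)
    {S : Set (Fin n → ℝ)} (hsymm : ∀ x ∈ S, -x ∈ S) (hconv : Convex ℝ S) {Y : ℝ}
    (hvol : 2 ^ n ≤ ENNReal.ofReal Y * volume S) :
    ∃ u : Fin (n + 1) → ℤ, u ≠ 0 ∧ |(u q : ℝ)| ≤ Y ∧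
      (fun p ↦ (u (q.succAbove p) : ℝ) - u q * a p) ∈ S := by
  -- An integer of absolute value less than `c = ⌊Y⌋ + 1` has absolute value at most `Y`.
  let c : ℤ := ⌊Y⌋ + 1
  have hYc : Y < c := by simp [c]
  let shear : (Fin (n + 1) → ℝ) →ₗ[ℝ] ℝ × (Fin n → ℝ) :=
    (LinearMap.proj q).prod
      (LinearMap.funLeft ℝ ℝ q.succAbove - (LinearMap.proj q).smulRight a)
  let Q : Set (ℝ × (Fin n → ℝ)) := Set.Ioo (-(c : ℝ)) c ×ˢ S
  have hQconv : Convex ℝ Q := (convex_Ioo _ _).prod hconv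
  have hshear : MeasurePreserving shear volume volume :=
    ((MeasurePreserving.id volume).skew_product
      (g := fun x v ↦ v - x • a) (by fun_prop)
      (.of_forall fun x ↦ (measurePreserving_sub_right volume (x • a)).map_eq)).comp
      (volume_preserving_piFinSuccAbove (fun _ ↦ ℝ) q)
  have hlarge : 2 ^ (n + 1) < volume (shear ⁻¹' Q) := by
    rw [hshear.measure_preimage
        (measurableSet_Ioo.nullMeasurableSet.prod (hconv.nullMeasurableSet volume)),
      Measure.volume_eq_prod, Measure.prod_prod, Real.volume_Ioo, sub_neg_eq_add, ← two_mul,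
      ENNReal.ofReal_mul zero_le_two, ENNReal.ofReal_ofNat, pow_succ', mul_assoc]
    refine ENNReal.mul_lt_mul_right two_ne_zero ENNReal.ofNat_ne_top ?_
    have hY : 0 < Y := by
      by_contra! h
      simp [ENNReal.ofReal_of_nonpos h] at hvol
    rcases eq_or_ne (volume S) ⊤ with htop | htop
    · rw [htop, ENNReal.mul_top (ENNReal.ofReal_pos.2 (hY.trans hYc)).ne']
      exact ENNReal.pow_lt_top ENNReal.ofNat_lt_top
    · have hS0 : volume S ≠ 0 := fun h ↦ by simp [h] at hvol
      exact hvol.trans_lt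
        (ENNReal.mul_lt_mul_left hS0 htop ((ENNReal.ofReal_lt_ofReal_iff (hY.trans hYc)).2 hYc))
  obtain ⟨u, hu0, huQ, huS⟩ := exists_int_ne_zero_mem_of_two_pow_lt_volume (S := shear ⁻¹' Q)
    (fun x hx ↦ by
      rw [Set.mem_preimage, map_neg]
      exact ⟨⟨neg_lt_neg hx.1.2, neg_lt.1 hx.1.1⟩, hsymm _ hx.2⟩)
    (hQconv.linear_preimage shear) (by rwa [Fintype.card_fin])
  refine ⟨u, hu0, ?_, huS⟩
  have habs : |(u q : ℝ)| < c := abs_lt.2 huQ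
  exact_mod_cast Int.le_floor.1 (Int.lt_add_one_iff.1 (by exact_mod_cast habs))

end Minkowski

section ImprovingMoves

open MeasureTheory

variable {ι κ : Type*}

/-- The integer matrix `A` with its entries regarded as real numbers. -/
abbrev realMatrix (A : Matrix ι κ ℤ) : Matrix ι κ ℝ := A.map Int.cast

lemma realMatrix_mulVec_intCast [Fintype κ] (A : Matrix ι κ ℤ) (u : κ → ℤ) (i : ι) :
    (realMatrix A *ᵥ fun p ↦ (u p : ℝ)) i = ((A *ᵥ u) i : ℤ) := by
  simp [mulVec, dotProduct]

/-- The moves from a lattice point with slack vector `s` in the system `A x ≤ b` that lead to a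
feasible point without increasing the slack of any row in `T`. -/
def improvingMoves [Fintype κ] (A : Matrix ι κ ℤ) (T : Set ι) (s : ι → ℤ) : Set (κ → ℝ) :=
  {x | ∀ i, (realMatrix A *ᵥ x) i ≤ s i ∧ (i ∈ T → 0 ≤ (realMatrix A *ᵥ x) i)}

lemma int_mem_improvingMoves_of_abs_sub_lt_one [Fintype κ] {A : Matrix ι κ ℤ} {T : Set ι}
    {s : ι → ℤ} (hs : 0 ≤ s) {y : κ → ℝ} (hy : y ∈ improvingMoves A T s) {t : ℝ} (ht0 : 0 ≤ t)
    (ht1 : t ≤ 1) {u : κ → ℤ}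
    (hu : ∀ i, |(realMatrix A *ᵥ fun p ↦ (u p : ℝ)) i - t * (realMatrix A *ᵥ y) i| < 1) :
    (fun p ↦ (u p : ℝ)) ∈ improvingMoves A T s := by
  intro i
  have hs' : (0 : ℝ) ≤ s i := Int.cast_nonneg (hs i)
  obtain ⟨hlow, hupp⟩ := abs_lt.1 (hu i)
  rw [realMatrix_mulVec_intCast] at hlow hupp ⊢
  constructor
  · have hlt : ((A *ᵥ u) i : ℝ) < s i + 1 := by nlinarith [(hy i).1]
    exact_mod_cast Int.lt_add_one_iff.1 (by exact_mod_cast hlt)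
  · intro hi
    have hlt : (-1 : ℝ) < (A *ᵥ u) i := by linarith [mul_nonneg ht0 ((hy i).2 hi)]
    exact_mod_cast Int.add_one_le_iff.2 (by exact_mod_cast hlt : (-1 : ℤ) < (A *ᵥ u) i)

variable {n : ℕ} {A : Matrix ι (Fin (n + 1)) ℤ} {T : Set ι} {s : ι → ℤ} {y : Fin (n + 1) → ℝ}
  {q : Fin (n + 1)}

/- Otherwise Minkowski's theorem gives a nonzero lattice point `u` close to the segment from `0` to
`y` or to `-y`; up to sign, `u` is an improving move. -/
lemma ofReal_abs_mul_volume_lt (hs : 0 ≤ s)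
    (hfree : ∀ u : Fin (n + 1) → ℤ, (fun p ↦ (u p : ℝ)) ∈ improvingMoves A T s → u = 0)
    (hy : y ∈ improvingMoves A T s) (hyq : y q ≠ 0) {S : Set (Fin n → ℝ)}
    (hsymm : ∀ x ∈ S, -x ∈ S) (hconv : Convex ℝ S)
    (hS : ∀ v ∈ S, (∀ i, (realMatrix A *ᵥ y) i = 0 →
      ∃ k : ℤ, ((realMatrix A).submatrix id q.succAbove *ᵥ v) i = k) →
      ∀ i, |((realMatrix A).submatrix id q.succAbove *ᵥ v) i| < 1) :
    ENNReal.ofReal |y q| * volume S < 2 ^ n := by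
  by_contra! hlarge
  obtain ⟨u, hu0, huq, ht0, huS⟩ : ∃ u : Fin (n + 1) → ℤ, u ≠ 0 ∧ |(u q : ℝ)| ≤ |y q| ∧
      0 ≤ u q / y q ∧ (fun p ↦ u (q.succAbove p) - u q * (y (q.succAbove p) / y q)) ∈ S := by
    obtain ⟨u, hu0, huq, huS⟩ := exists_int_ne_zero_shear_mem q
      (fun p ↦ y (q.succAbove p) / y q) hsymm hconv hlarge
    rcases le_total 0 (u q / y q) with h | h
    · exact ⟨u, hu0, huq, h, huS⟩
    · refine ⟨-u, neg_ne_zero.2 hu0, by simpa using huq, by simpa [neg_div] using h, ?_⟩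
      convert hsymm _ huS using 2 with p
      simp only [Pi.neg_apply, Int.cast_neg]
      ring
  set v : Fin n → ℝ := fun p ↦ u (q.succAbove p) - u q * (y (q.succAbove p) / y q) with hv
  have hsplit (i : ι) : ((realMatrix A).submatrix id q.succAbove *ᵥ v) i =
      (realMatrix A *ᵥ fun p ↦ (u p : ℝ)) i - u q / y q * (realMatrix A *ᵥ y) i := by
    have hdiff : Function.extend q.succAbove v 0 = (fun p ↦ (u p : ℝ)) - (u q / y q) • y := by
      refine funext ((Fin.forall_iff_succAbove q).2 ⟨?_, fun p ↦ ?_⟩)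
      · rw [Function.extend_apply' _ _ _ (by simp)]
        simp [div_mul_cancel₀ _ hyq]
      · rw [Fin.succAbove_right_injective.extend_apply]
        simp only [hv, Pi.sub_apply, Pi.smul_apply, smul_eq_mul]
        ring
    rw [submatrix_mulVec_eq_mulVec_extend _ Fin.succAbove_right_injective, hdiff, mulVec_sub,
      mulVec_smul]
    rfl
  have hsmall := hS v huS fun i hi ↦ ⟨(A *ᵥ u) i, by
    rw [hsplit, hi, mul_zero, sub_zero, realMatrix_mulVec_intCast]⟩
  have ht1 : u q / y q ≤ 1 := (le_abs_self _).trans <| by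
    rw [abs_div]
    exact div_le_one_of_le₀ huq (abs_nonneg _)
  exact hu0 (hfree u (int_mem_improvingMoves_of_abs_sub_lt_one hs hy ht0 ht1 fun i ↦
    hsplit i ▸ hsmall i))

/- The previous lemma in the coordinates given by a basis of rows `j`, where the rows outside `F`
vanish at `y`. -/
lemma abs_mul_lt_two_pow_mul_abs_det (hs : 0 ≤ s)
    (hfree : ∀ u : Fin (n + 1) → ℤ, (fun p ↦ (u p : ℝ)) ∈ improvingMoves A T s → u = 0)
    (hy : y ∈ improvingMoves A T s) (hyq : y q ≠ 0) {M : Matrix ι (Fin n) ℝ}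
    (hM : M = (realMatrix A).submatrix id q.succAbove) {F : Finset (Fin n)} {j : Fin n → ι}
    (hF : ∀ p ∉ F, (realMatrix A *ᵥ y) (j p) = 0) (hdet : (M.submatrix j id).det ≠ 0)
    {O : Set (Fin n → ℝ)} (hsymm : ∀ x ∈ O, -x ∈ O) (hconv : Convex ℝ O)
    (hO : ∀ x ∈ O, ∀ p ∉ F, |x p| < 1)
    (hOF : ∀ x ∈ O, (∀ p ∉ F, x p = 0) → ∀ i, |((M * (M.submatrix j id)⁻¹) *ᵥ x) i| < 1)
    {V : ℝ} (hV : ENNReal.ofReal V ≤ volume O) : |y q| * V < 2 ^ n * |(M.submatrix j id).det| := by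
  set B := M.submatrix j id
  have hcoord (v : Fin n → ℝ) : (M * B⁻¹) *ᵥ (B *ᵥ v) = M *ᵥ v := by
    rw [mulVec_mulVec, Matrix.mul_assoc, nonsing_inv_mul _ hdet.isUnit, Matrix.mul_one]
  have hvol := ofReal_abs_mul_volume_lt (S := toLin' B ⁻¹' O) hs hfree hy hyq
    (fun x hx ↦ by
      rw [Set.mem_preimage, map_neg]
      exact hsymm _ hx)
    (hconv.linear_preimage _) (fun v hv hint ↦ by
      rw [← hM] at hint ⊢
      rw [← hcoord]
      refine hOF _ hv fun p hp ↦ ?_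
      obtain ⟨k, hk⟩ := hint (j p) (hF p hp)
      have hk' : (B *ᵥ v) p = k := hk
      have hk1 := hO _ hv p hp
      rw [toLin'_apply, hk', ← Int.cast_abs] at hk1
      have hk0 : k = 0 := Int.abs_lt_one_iff.1 (by exact_mod_cast hk1)
      rw [hk', hk0, Int.cast_zero])
  rw [Measure.addHaar_preimage_linearMap _ (by rwa [LinearMap.det_toLin']), LinearMap.det_toLin',
    abs_inv, ENNReal.ofReal_inv_of_pos (abs_pos.2 hdet), mul_left_comm, mul_comm,
    ← div_eq_mul_inv, ENNReal.div_lt_iff (.inl (by simpa using hdet)) (.inl ENNReal.ofReal_ne_top),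
    ← ENNReal.ofReal_ofNat, ← ENNReal.ofReal_pow zero_le_two,
    ← ENNReal.ofReal_mul (by positivity)] at hvol
  refine (ENNReal.ofReal_lt_ofReal_iff'.1 (lt_of_le_of_lt ?_ hvol)).1
  rw [ENNReal.ofReal_mul (abs_nonneg _)]
  gcongr

end ImprovingMoves

section Area

open MeasureTheory

/-- The open quadrilateral with vertices `(0, 0)`, `(1, 0)`, `(1 / s, 1 / s)` and `(0, 1)`. -/
def kite (s : ℝ) : Set (ℝ × ℝ) :=
  {v | 0 < v.1 ∧ 0 < v.2 ∧ v.1 + (s - 1) * v.2 < 1 ∧ v.2 + (s - 1) * v.1 < 1}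

lemma measurableSet_kite (s : ℝ) : MeasurableSet (kite s) := by
  unfold kite
  measurability

lemma volume_regionBetween_id {s : ℝ} (hs : 1 ≤ s) :
    volume (regionBetween id (fun x : ℝ ↦ 1 - (s - 1) * x) (Set.Ioo 0 (1 / s))) =
      ENNReal.ofReal (1 / (2 * s)) := by
  have hs0 : 0 < s := zero_lt_one.trans_le hs
  have hint {f : ℝ → ℝ} (hf : Continuous f) : IntegrableOn f (Set.Ioo 0 (1 / s)) :=
    (hf.integrableOn_Icc (a := 0) (b := 1 / s)).mono_set Set.Ioo_subset_Icc_self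
  have hle (x : ℝ) (hx : x ∈ Set.Ioo 0 (1 / s)) : id x ≤ 1 - (s - 1) * x := by
    have := (lt_div_iff₀ hs0).1 hx.2
    simp only [id]
    linarith
  have hheight (x : ℝ) : ((fun x : ℝ ↦ 1 - (s - 1) * x) - id : ℝ → ℝ) x = 1 - s * x := by
    simp only [Pi.sub_apply, id]
    ring
  rw [Measure.volume_eq_prod, volume_regionBetween_eq_integral (hint continuous_id)
    (hint (by fun_prop)) measurableSet_Ioo hle]
  simp only [hheight]
  rw [← integral_Ioc_eq_integral_Ioo, ← intervalIntegral.integral_of_le (by positivity),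
    intervalIntegral.integral_sub (by simp) (Continuous.intervalIntegrable (by fun_prop) _ _),
    intervalIntegral.integral_const_mul, integral_id, intervalIntegral.integral_const]
  congr 1
  simp only [sub_zero, smul_eq_mul, mul_one]
  field_simp
  ring

/- The diagonal cuts the quadrilateral into two triangles of equal area. -/
lemma ofReal_one_div_le_volume_kite {s : ℝ} (hs1 : 1 ≤ s) (hs2 : s ≤ 2) :
    ENNReal.ofReal (1 / s) ≤ volume (kite s) := by
  have hhalf : 0 ≤ 1 / (2 * s) := one_div_nonneg.2 (by linarith)
  let R := regionBetween id (fun x : ℝ ↦ 1 - (s - 1) * x) (Set.Ioo 0 (1 / s))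
  have hR : MeasurableSet R :=
    measurableSet_regionBetween measurable_id (by fun_prop) measurableSet_Ioo
  have hmem {v : ℝ × ℝ} (hv : v ∈ R) : 0 < v.1 ∧ v.1 < v.2 ∧ v.2 + (s - 1) * v.1 < 1 :=
    ⟨hv.1.1, hv.2.1, lt_sub_iff_add_lt.1 hv.2.2⟩
  have hother {x y : ℝ} (hxy : x < y) (hy : y + (s - 1) * x < 1) : x + (s - 1) * y < 1 := by
    nlinarith [mul_nonneg (sub_nonneg.2 hxy.le) (sub_nonneg.2 hs2)]
  have hdisj : Disjoint R (Prod.swap ⁻¹' R) := Set.disjoint_left.2 fun v hv hv' ↦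
    (hmem hv).2.1.asymm (hmem hv').2.1
  have hswap : volume (Prod.swap ⁻¹' R) = volume R :=
    (Measure.measurePreserving_swap (μ := (volume : Measure ℝ))
      (ν := (volume : Measure ℝ))).measure_preimage hR.nullMeasurableSet
  calc ENNReal.ofReal (1 / s)
      = volume R + volume (Prod.swap ⁻¹' R) := by
        rw [hswap, volume_regionBetween_id hs1, ← ENNReal.ofReal_add hhalf hhalf]
        ring_nf
    _ = volume (R ∪ Prod.swap ⁻¹' R) := (measure_union hdisj (measurable_swap hR)).symm
    _ ≤ volume (kite s) := by
        refine measure_mono (Set.union_subset (fun v hv ↦ ?_) fun v hv ↦ ?_)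
        · obtain ⟨h0, hlt, h1⟩ := hmem hv
          exact ⟨h0, h0.trans hlt, hother hlt h1, h1⟩
        · obtain ⟨h0, hlt, h1⟩ := hmem hv
          exact ⟨h0.trans hlt, h0, h1, hother hlt h1⟩

lemma abs_mul_add_mul_lt_one_of_mem_kite {s a b : ℝ} (ha : |a| ≤ 1) (hb : |b| ≤ 1)
    (hab : |a + b| ≤ s) {v : ℝ × ℝ} (hv : v ∈ kite s) : |a * v.1 + b * v.2| < 1 := by
  have bound {a b x y : ℝ} (hb : |b| ≤ 1) (hab : |a + b| ≤ s) (hx : 0 < x) (hxy : x ≤ y)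
      (hy : y + (s - 1) * x < 1) : |a * x + b * y| < 1 :=
    calc |a * x + b * y| = |(a + b) * x + b * (y - x)| := by ring_nf
      _ ≤ |a + b| * x + |b| * (y - x) := by
        refine (abs_add_le _ _).trans_eq ?_
        rw [abs_mul, abs_mul, abs_of_pos hx, abs_of_nonneg (sub_nonneg.2 hxy)]
      _ ≤ s * x + 1 * (y - x) := by gcongr
      _ < 1 := by linarith
  obtain ⟨hx, hy, hxy, hyx⟩ := hv
  rcases le_total v.1 v.2 with h | h
  · exact bound hb hab hx h hyx
  · rw [add_comm]
    exact bound ha (add_comm a b ▸ hab) hy h hxy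

lemma abs_add_add_abs_sub_le_three {a b c d : ℝ} (ha : |a| ≤ 1) (hb : |b| ≤ 1) (hc : |c| ≤ 1)
    (hd : |d| ≤ 1) (hdet : |a * d - b * c| ≤ 1) : |a + b| + |c - d| ≤ 3 := by
  have key {a b c d : ℝ} (ha : |a| ≤ 1) (hb : |b| ≤ 1) (hc : |c| ≤ 1) (hd : |d| ≤ 1)
      (hdet : |a * d - b * c| ≤ 1) : a + b + (c - d) ≤ 3 := by
    have had : 0 ≤ (1 - a) * (1 + d) :=
      mul_nonneg (by linarith [(abs_le.1 ha).2]) (by linarith [(abs_le.1 hd).1])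
    have hbc : 0 ≤ (1 - b) * (1 - c) :=
      mul_nonneg (by linarith [(abs_le.1 hb).2]) (by linarith [(abs_le.1 hc).2])
    linarith [(abs_le.1 hdet).1]
  have hdet' : |-(a * d) + b * c| ≤ 1 := by rwa [← abs_neg, neg_add', neg_neg]
  rcases abs_choice (a + b) with hab | hab <;> rcases abs_choice (c - d) with hcd | hcd <;>
    rw [hab, hcd]
  · exact key ha hb hc hd hdet
  · linarith [key ha hb ((abs_neg c).trans_le hc) ((abs_neg d).trans_le hd) (by simpa using hdet')]
  · linarith [key ((abs_neg a).trans_le ha) ((abs_neg b).trans_le hb) hc hd (by simpa using hdet')]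
  · linarith [key ((abs_neg a).trans_le ha) ((abs_neg b).trans_le hb) ((abs_neg c).trans_le hc)
      ((abs_neg d).trans_le hd) (by simpa using hdet)]

lemma exists_abs_add_le_abs_sub_le {ι : Type*} {a b : ι → ℝ} (ha : ∀ i, |a i| ≤ 1)
    (hb : ∀ i, |b i| ≤ 1) (hdet : ∀ i k, |a i * b k - b i * a k| ≤ 1) :
    ∃ t, 1 ≤ t ∧ t ≤ 2 ∧ (∀ i, |a i + b i| ≤ 3 - t) ∧ ∀ i, |a i - b i| ≤ t := by
  have hadd (i : ι) : |a i + b i| ≤ 2 := by linarith [abs_add_le (a i) (b i), ha i, hb i]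
  have hsub (i : ι) : |a i - b i| ≤ 2 := by linarith [abs_sub (a i) (b i), ha i, hb i]
  obtain ⟨t, hlow, hupp⟩ := exists_between_of_forall_le
    (s := insert 1 (Set.range fun i ↦ |a i - b i|))
    (t := insert 2 (Set.range fun i ↦ 3 - |a i + b i|))
    (Set.insert_nonempty _ _) (Set.insert_nonempty _ _) <| by
      rintro _ (rfl | ⟨k, rfl⟩) _ (rfl | ⟨i, rfl⟩)
      · exact one_le_two
      · linarith [hadd i]
      · exact hsub k
      · linarith [abs_add_add_abs_sub_le_three (ha i) (hb i) (ha k) (hb k) (hdet i k)]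
  exact ⟨t, hlow (Set.mem_insert _ _), hupp (Set.mem_insert _ _),
    fun i ↦ le_sub_comm.1 (hupp (Set.mem_insert_of_mem _ ⟨i, rfl⟩)),
    fun i ↦ hlow (Set.mem_insert_of_mem _ ⟨i, rfl⟩)⟩

/- Equality holds at `t = 3 / 2`. -/
lemma ofReal_four_thirds_le_volume_kite_union {t : ℝ} (ht1 : 1 ≤ t) (ht2 : t ≤ 2) :
    ENNReal.ofReal (4 / 3) ≤ volume (kite (3 - t) ∪ Prod.map id Neg.neg ⁻¹' kite t) := by
  have hflip : MeasurePreserving (Prod.map id Neg.neg : ℝ × ℝ → ℝ × ℝ) volume volume :=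
    (MeasurePreserving.id volume).prod (Measure.measurePreserving_neg volume)
  have hdisj : Disjoint (kite (3 - t)) (Prod.map id Neg.neg ⁻¹' kite t) :=
    Set.disjoint_left.2 fun v hv hv' ↦ (neg_pos.1 hv'.2.1).asymm hv.2.1
  calc ENNReal.ofReal (4 / 3) ≤ ENNReal.ofReal (1 / (3 - t) + 1 / t) := by
        refine ENNReal.ofReal_le_ofReal ?_
        rw [div_add_div _ _ (by linarith) (by linarith),
          div_le_div_iff₀ (by norm_num) (by nlinarith)]
        nlinarith [sq_nonneg (2 * t - 3)]
    _ = ENNReal.ofReal (1 / (3 - t)) + ENNReal.ofReal (1 / t) :=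
        ENNReal.ofReal_add (one_div_nonneg.2 (by linarith)) (by positivity)
    _ ≤ volume (kite (3 - t)) + volume (kite t) :=
        add_le_add (ofReal_one_div_le_volume_kite (by linarith) (by linarith))
          (ofReal_one_div_le_volume_kite ht1 ht2)
    _ = volume (kite (3 - t) ∪ Prod.map id Neg.neg ⁻¹' kite t) := by
        rw [measure_union hdisj (hflip.measurable (measurableSet_kite t)),
          hflip.measure_preimage (measurableSet_kite t).nullMeasurableSet]

/- The region contains a kite in each quadrant, with parameter `3 - t` in two opposite quadrants
and `t` in the other two; the total area is `2 / (3 - t) + 2 / t`. -/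
lemma ofReal_eight_thirds_le_volume {ι : Type*} {a b : ι → ℝ} (ha : ∀ i, |a i| ≤ 1)
    (hb : ∀ i, |b i| ≤ 1) (hdet : ∀ i k, |a i * b k - b i * a k| ≤ 1) :
    ENNReal.ofReal (8 / 3) ≤ volume {v : ℝ × ℝ | ∀ i, |a i * v.1 + b i * v.2| < 1} := by
  obtain ⟨t, ht1, ht2, hadd, hsub⟩ := exists_abs_add_le_abs_sub_le ha hb hdet
  let R := kite (3 - t) ∪ Prod.map id Neg.neg ⁻¹' kite t
  have hR : MeasurableSet R := (measurableSet_kite _).union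
    ((measurable_id.prodMap measurable_neg) (measurableSet_kite t))
  have hRpos {v : ℝ × ℝ} (hv : v ∈ R) : 0 < v.1 := hv.elim And.left And.left
  have hdisj : Disjoint R (-R) := Set.disjoint_left.2 fun v hv hv' ↦
    (neg_pos.1 (hRpos hv')).asymm (hRpos hv)
  have hsubset {v : ℝ × ℝ} (hv : v ∈ R) (i : ι) : |a i * v.1 + b i * v.2| < 1 := by
    rcases hv with hv | hv
    · exact abs_mul_add_mul_lt_one_of_mem_kite (ha i) (hb i) (hadd i) hv
    · have := abs_mul_add_mul_lt_one_of_mem_kite (ha i) ((abs_neg _).trans_le (hb i))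
        (by rw [← sub_eq_add_neg]; exact hsub i) hv
      simpa only [Prod.map_fst, Prod.map_snd, id, neg_mul_neg] using this
  have hvolR := ofReal_four_thirds_le_volume_kite_union ht1 ht2
  calc ENNReal.ofReal (8 / 3) = ENNReal.ofReal (4 / 3) + ENNReal.ofReal (4 / 3) := by
        rw [← ENNReal.ofReal_add (by norm_num) (by norm_num)]
        norm_num
    _ ≤ volume R + volume (-R) := by
        rw [Measure.measure_neg]
        exact add_le_add hvolR hvolR
    _ = volume (R ∪ -R) := (measure_union hdisj hR.neg).symm
    _ ≤ _ := measure_mono (Set.union_subset (fun v hv ↦ hsubset hv) fun v hv i ↦ by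
        rw [← abs_neg, neg_add', ← mul_neg, sub_eq_add_neg, ← mul_neg]
        exact hsubset hv i)

lemma volume_pair_mem_and_forall_abs_lt_one {r : ℕ} (s : Fin (r + 2)) (t : Fin (r + 1))
    (S : Set (ℝ × ℝ)) :
    volume {x : Fin (r + 2) → ℝ | (x s, x (s.succAbove t)) ∈ S ∧
      ∀ p, |x (s.succAbove (t.succAbove p))| < 1} = volume S * 2 ^ r := by
  let e : (Fin (r + 2) → ℝ) ≃ᵐ (ℝ × ℝ) × (Fin r → ℝ) :=
    (MeasurableEquiv.piFinSuccAbove (fun _ ↦ ℝ) s).trans <|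
      ((MeasurableEquiv.refl ℝ).prodCongr (MeasurableEquiv.piFinSuccAbove (fun _ ↦ ℝ) t)).trans
        MeasurableEquiv.prodAssoc.symm
  have he : MeasurePreserving e volume volume :=
    (volume_preserving_prodAssoc.symm _).comp <|
      ((MeasurePreserving.id volume).prod (volume_preserving_piFinSuccAbove (fun _ ↦ ℝ) t)).comp <|
        volume_preserving_piFinSuccAbove (fun _ ↦ ℝ) s
  have hcube : volume (Set.univ.pi fun _ : Fin r ↦ Set.Ioo (-1 : ℝ) 1) = 2 ^ r := by
    rw [Real.volume_pi_Ioo]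
    norm_num
  rw [← hcube, ← Measure.prod_prod, ← Measure.volume_eq_prod, ← he.measure_preimage_equiv]
  congr 1
  ext x
  simp only [abs_lt]
  exact ⟨fun h ↦ ⟨h.1, fun p _ ↦ h.2 p⟩, fun h ↦ ⟨h.1, fun p ↦ h.2 p (Set.mem_univ p)⟩⟩

end Area

section MaxMinor

variable {m n k : ℕ}

lemma abs_det_submatrix_le_maxMinor (A : Matrix (Fin m) (Fin n) ℤ) (j : Fin k → Fin m)
    (e : Fin k → Fin n) : |((realMatrix A).submatrix j e).det| ≤ maxMinor A k := by
  have hcast : ((realMatrix A).submatrix j e).det = ((A.submatrix j e).det : ℤ) := by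
    rw [Int.cast_det, realMatrix, submatrix_map]
  rw [hcast, ← Int.cast_abs, ← Nat.cast_natAbs, Nat.cast_le]
  by_cases hinj : Function.Injective j ∧ Function.Injective e
  · exact Finset.le_sup (f := fun p : (Fin k → Fin m) × (Fin k → Fin n) ↦
      (A.submatrix p.1 p.2).det.natAbs) (Finset.mem_filter.2 ⟨Finset.mem_univ (j, e), hinj⟩)
  · have hzero : (A.submatrix j e).det = 0 := by
      rcases not_and_or.1 hinj with h | h <;>
        obtain ⟨p, p', hpp, hne⟩ := Function.not_injective_iff.1 h
      · exact det_zero_of_row_eq hne (funext fun i ↦ congrArg (A · (e i)) hpp)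
      · exact det_zero_of_column_eq hne fun i ↦ congrArg (A (j i)) hpp
    simp [hzero]

lemma maxMinor_pos {A : Matrix (Fin m) (Fin (n + 1)) ℤ}
    (hA : Function.Injective (realMatrix A).mulVec) : 0 < maxMinor A n := by
  obtain ⟨-, j, -, -, hdet⟩ := exists_submatrix_det_ne_zero
    (mulVec_submatrix_injective hA (Fin.castSucc_injective n)) 0
  exact_mod_cast (abs_pos.2 hdet).trans_le (abs_det_submatrix_le_maxMinor A j Fin.castSucc)

end MaxMinor

section FreeImprovingMoves

open MeasureTheory

lemma convex_setOf_forall_abs_lt_one {E ι : Type*} [AddCommGroup E] [Module ℝ E]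
    (L : ι → E →ₗ[ℝ] ℝ) : Convex ℝ {x | ∀ i, |L i x| < 1} := by
  simp only [abs_lt, Set.ofPred_forall]
  exact convex_iInter fun i ↦ (convex_Ioo (-1) 1).linear_preimage (L i)

lemma mulVec_apply_eq_sum_of_forall_notMem {R ι κ : Type*} [NonUnitalNonAssocSemiring R]
    [Fintype κ] (C : Matrix ι κ R) {F : Finset κ} {x : κ → R} (hx : ∀ p ∉ F, x p = 0) (i : ι) :
    (C *ᵥ x) i = ∑ p ∈ F, C i p * x p :=
  (Finset.sum_subset F.subset_univ fun p _ hp ↦ by rw [hx p hp, mul_zero]).symm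

variable {ι : Type*} {n : ℕ} {A : Matrix ι (Fin (n + 1)) ℤ} {T : Set ι} {s : ι → ℤ}
  {y : Fin (n + 1) → ℝ} {q : Fin (n + 1)} {M : Matrix ι (Fin n) ℝ} {F : Finset (Fin n)}
  {j : Fin n → ι}

lemma abs_lt_abs_det_of_card_le_one (hs : 0 ≤ s)
    (hfree : ∀ u : Fin (n + 1) → ℤ, (fun p ↦ (u p : ℝ)) ∈ improvingMoves A T s → u = 0)
    (hy : y ∈ improvingMoves A T s) (hyq : y q ≠ 0)
    (hM : M = (realMatrix A).submatrix id q.succAbove)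
    (hj : IsMaximalRowBasis M (realMatrix A *ᵥ y) F j) (hF : F.card ≤ 1) :
    |y q| < |(M.submatrix j id).det| := by
  have hcube : ENNReal.ofReal (2 ^ n) ≤ volume {x : Fin n → ℝ | ∀ p, |x p| < 1} := by
    have hpi : {x : Fin n → ℝ | ∀ p, |x p| < 1} = Set.univ.pi fun _ ↦ Set.Ioo (-1) 1 := by
      ext x
      simp only [abs_lt, Set.mem_ofPred_eq, Set.mem_univ_pi, Set.mem_Ioo]
    rw [hpi, Real.volume_pi_Ioo]
    norm_num [ENNReal.ofReal_pow]
  have hlt := abs_mul_lt_two_pow_mul_abs_det hs hfree hy hyq hM hj.apply_eq_zero hj.det_ne_zero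
    (O := {x | ∀ p, |x p| < 1}) (fun x hx p ↦ (abs_neg (x p)).trans_lt (hx p))
    (convex_setOf_forall_abs_lt_one fun p ↦ LinearMap.proj p) (fun x hx p _ ↦ hx p)
    (fun x hx hxF i ↦ ?_) hcube
  · rw [mul_comm] at hlt
    exact lt_of_mul_lt_mul_left hlt (by positivity)
  · rw [mulVec_apply_eq_sum_of_forall_notMem _ hxF]
    rcases Nat.le_one_iff_eq_zero_or_eq_one.1 hF with h | h
    · rw [Finset.card_eq_zero.1 h, Finset.sum_empty, abs_zero]
      exact one_pos
    · obtain ⟨p, rfl⟩ := Finset.card_eq_one.1 h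
      rw [Finset.sum_singleton, abs_mul]
      exact (mul_le_of_le_one_left (abs_nonneg _)
        (hj.abs_mul_inv_apply_le_one (Finset.mem_singleton_self p) i)).trans_lt (hx p)

lemma abs_lt_three_halves_mul_abs_det_of_card_eq_two (hs : 0 ≤ s)
    (hfree : ∀ u : Fin (n + 1) → ℤ, (fun p ↦ (u p : ℝ)) ∈ improvingMoves A T s → u = 0)
    (hy : y ∈ improvingMoves A T s) (hyq : y q ≠ 0)
    (hM : M = (realMatrix A).submatrix id q.succAbove)
    (hj : IsMaximalRowBasis M (realMatrix A *ᵥ y) F j) (hF : F.card = 2) :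
    |y q| < 3 / 2 * |(M.submatrix j id).det| := by
  obtain ⟨a, b, hab, rfl⟩ := Finset.card_eq_two.1 hF
  obtain ⟨r, rfl⟩ : ∃ r, n = r + 2 :=
    Nat.exists_eq_add_of_le' (hF.symm.trans_le (card_finset_fin_le _))
  obtain ⟨b, rfl⟩ := Fin.exists_succAbove_eq hab.symm
  set C := M * (M.submatrix j id)⁻¹
  let S : Set (ℝ × ℝ) := {v | ∀ i, |C i a * v.1 + C i (a.succAbove b) * v.2| < 1}
  let O : Set (Fin (r + 2) → ℝ) := {x | (x a, x (a.succAbove b)) ∈ S ∧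
    ∀ p, |x (a.succAbove (b.succAbove p))| < 1}
  let coord (p : Fin (r + 2)) : (Fin (r + 2) → ℝ) →ₗ[ℝ] ℝ := LinearMap.proj p
  have hO : Convex ℝ O :=
    (convex_setOf_forall_abs_lt_one fun i ↦
      C i a • coord a + C i (a.succAbove b) • coord (a.succAbove b)).inter
    (convex_setOf_forall_abs_lt_one fun p ↦ coord (a.succAbove (b.succAbove p)))
  have hvol : ENNReal.ofReal (8 / 3 * 2 ^ r) ≤ volume O := by
    have hS : ENNReal.ofReal (8 / 3) ≤ volume S := ofReal_eight_thirds_le_volume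
      (fun i ↦ hj.abs_mul_inv_apply_le_one (by simp) i)
      (fun i ↦ hj.abs_mul_inv_apply_le_one (by simp) i)
      (hj.abs_mul_inv_minor_le_one hab (by simp) (by simp))
    rw [volume_pair_mem_and_forall_abs_lt_one, ENNReal.ofReal_mul (by norm_num),
      ENNReal.ofReal_pow zero_le_two, ENNReal.ofReal_ofNat]
    gcongr
  have hlt := abs_mul_lt_two_pow_mul_abs_det hs hfree hy hyq hM hj.apply_eq_zero hj.det_ne_zero
    (O := O) (fun x hx ↦ ⟨fun i ↦ ?_, fun p ↦ (abs_neg _).trans_lt (hx.2 p)⟩) hO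
    (fun x hx p hp ↦ ?_) (fun x hx hxF i ↦ ?_) hvol
  · have h2 : (0 : ℝ) < 2 ^ r := by positivity
    rw [pow_add] at hlt
    nlinarith
  · simpa only [Pi.neg_apply, mul_neg, ← neg_add, abs_neg] using hx.1 i
  · simp only [Finset.mem_insert, Finset.mem_singleton, not_or] at hp
    obtain ⟨p, rfl⟩ := Fin.exists_succAbove_eq hp.1
    obtain ⟨p, rfl⟩ := Fin.exists_succAbove_eq fun h ↦ hp.2 (congrArg a.succAbove h)
    exact hx.2 p
  · rw [mulVec_apply_eq_sum_of_forall_notMem _ hxF, Finset.sum_pair hab]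
    exact hx.1 i

lemma mem_improvingMoves_of_mem_uIcc {u : Fin (n + 1) → ℝ} (hs : 0 ≤ s)
    (hy : y ∈ improvingMoves A T s)
    (hu : ∀ i, (realMatrix A *ᵥ u) i ∈ Set.uIcc 0 ((realMatrix A *ᵥ y) i)) :
    u ∈ improvingMoves A T s := fun i ↦
  ⟨(hu i).2.trans (sup_le (Int.cast_nonneg (hs i)) (hy i).1),
    fun hi ↦ (le_inf le_rfl ((hy i).2 hi)).trans (hu i).1⟩

end FreeImprovingMoves

section Proximity

variable {m n : ℕ} {A : Matrix (Fin m) (Fin (n + 1)) ℤ} {T : Set (Fin m)} {s : Fin m → ℤ}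

lemma abs_lt_mul_maxMinor_of_finrank_flat_le (hA : Function.Injective (realMatrix A).mulVec)
    (hs : 0 ≤ s)
    (hfree : ∀ u : Fin (n + 1) → ℤ, (fun p ↦ (u p : ℝ)) ∈ improvingMoves A T s → u = 0)
    (q : Fin (n + 1)) {k : ℕ} (hk : k ≤ 1) {y : Fin (n + 1) → ℝ} (hy : y ∈ improvingMoves A T s)
    (hdim : Module.finrank ℝ (flat (realMatrix A).mulVecLin y) ≤ k + 2) :
    |y q| < (k + 2) / 2 * maxMinor A n := by
  have hpos : (0 : ℝ) < maxMinor A n := Nat.cast_pos.2 (maxMinor_pos hA)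
  by_cases hyq : y q = 0
  · rw [hyq, abs_zero]
    positivity
  have hq := Fin.succAbove_right_injective (p := q)
  obtain ⟨F, hF, j, hj⟩ := exists_isMaximalRowBasis (mulVec_submatrix_injective hA hq)
    (realMatrix A *ᵥ y)
  have hcard : F.card ≤ k + 1 := Nat.lt_succ_iff.1 <| hF.trans_lt <|
    (finrank_tightKer_submatrix_lt _ hq (by simp) hyq).trans_le hdim
  have hdet : |(((realMatrix A).submatrix id q.succAbove).submatrix j id).det| ≤ maxMinor A n :=
    abs_det_submatrix_le_maxMinor A j q.succAbove
  have hk0 : (0 : ℝ) ≤ k := Nat.cast_nonneg k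
  rcases le_or_gt F.card 1 with h1 | h2
  · have := abs_lt_abs_det_of_card_le_one hs hfree hy hyq rfl hj h1
    nlinarith
  · obtain rfl : k = 1 := by omega
    have := abs_lt_three_halves_mul_abs_det_of_card_eq_two hs hfree hy hyq rfl hj (by omega)
    norm_num
    linarith

theorem abs_lt_half_mul_maxMinor (hA : Function.Injective (realMatrix A).mulVec) (hs : 0 ≤ s)
    (hfree : ∀ u : Fin (n + 1) → ℤ, (fun p ↦ (u p : ℝ)) ∈ improvingMoves A T s → u = 0)
    (q : Fin (n + 1)) {k : ℕ} {y : Fin (n + 1) → ℝ} (hy : y ∈ improvingMoves A T s)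
    (hdim : Module.finrank ℝ (flat (realMatrix A).mulVecLin y) ≤ k + 2) :
    |y q| < (k + 2) / 2 * maxMinor A n := by
  induction k using Nat.twoStepInduction generalizing y with
  | zero => exact abs_lt_mul_maxMinor_of_finrank_flat_le hA hs hfree q zero_le_one hy hdim
  | one => exact abs_lt_mul_maxMinor_of_finrank_flat_le hA hs hfree q le_rfl hy hdim
  | more k ih _ =>
    obtain ⟨u, hu, hu2, hyu⟩ := exists_flat_decomposition (Φ := (realMatrix A).mulVecLin) hA y hdim
    have hu_mem := mem_improvingMoves_of_mem_uIcc hs hy hu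
    have hyu_mem : y - u ∈ improvingMoves A T s := by
      refine mem_improvingMoves_of_mem_uIcc hs hy fun i ↦ ?_
      rw [mulVec_sub, Pi.sub_apply]
      refine Set.mem_uIcc.2 ((Set.mem_uIcc.1 (hu i)).imp ?_ ?_) <;>
        exact fun ⟨h₁, h₂⟩ ↦ ⟨by simpa using h₂, by simpa using h₁⟩
    have hlt₁ := abs_lt_mul_maxMinor_of_finrank_flat_le hA hs hfree q zero_le_one hu_mem hu2
    have hlt₂ := ih hyu_mem hyu
    calc |y q| = |u q + (y - u) q| := by rw [Pi.sub_apply, add_sub_cancel]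
      _ ≤ |u q| + |(y - u) q| := abs_add_le _ _
      _ < ((0 : ℕ) + 2) / 2 * maxMinor A n + (k + 2) / 2 * maxMinor A n := add_lt_add hlt₁ hlt₂
      _ = _ := by
        push_cast
        ring

end Proximity

section LinearProgram

open Filter Topology

variable {ι κ : Type*} [Fintype κ] {M : Matrix ι κ ℝ} {b : ι → ℝ} {c x w : κ → ℝ}

/-- The feasible region `P(M, b)` of the system `M x ≤ b`. -/
def polyhedron (M : Matrix ι κ ℝ) (b : ι → ℝ) : Set (κ → ℝ) := {x | ∀ i, (M *ᵥ x) i ≤ b i}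

lemma eventually_add_smul_mem_polyhedron [Finite ι] (hx : x ∈ polyhedron M b)
    (hw : ∀ i, (M *ᵥ x) i = b i → (M *ᵥ w) i ≤ 0) :
    ∀ᶠ ε in 𝓝[>] (0 : ℝ), x + ε • w ∈ polyhedron M b := by
  refine eventually_all.2 fun i ↦ ?_
  simp only [mulVec_add, mulVec_smul, Pi.add_apply, Pi.smul_apply, smul_eq_mul]
  rcases (hx i).eq_or_lt with htight | hslack
  · filter_upwards [self_mem_nhdsWithin] with ε hε
    linarith [mul_nonpos_of_nonneg_of_nonpos (Set.mem_Ioi.1 hε).le (hw i htight)]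
  · have hlim : Tendsto (fun ε ↦ (M *ᵥ x) i + ε * (M *ᵥ w) i) (𝓝 0) (𝓝 ((M *ᵥ x) i)) :=
      Continuous.tendsto' (by fun_prop) _ _ (by simp)
    exact ((hlim.eventually_lt_const hslack).filter_mono nhdsWithin_le_nhds).mono fun _ ↦ le_of_lt

lemma eq_zero_of_mem_extremePoints_polyhedron [Finite ι]
    (hx : x ∈ Set.extremePoints ℝ (polyhedron M b))
    (hw : ∀ i, (M *ᵥ x) i = b i → (M *ᵥ w) i = 0) : w = 0 := by
  have hplus := eventually_add_smul_mem_polyhedron hx.1 fun i hi ↦ (hw i hi).le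
  have hminus := eventually_add_smul_mem_polyhedron (w := -w) hx.1 fun i hi ↦ by
    rw [mulVec_neg, Pi.neg_apply, hw i hi, neg_zero]
  obtain ⟨ε, ⟨hε₁, hε₂⟩, hε⟩ := ((hplus.and hminus).and self_mem_nhdsWithin).exists
  have hmid : x ∈ openSegment ℝ (x + ε • w) (x + ε • -w) :=
    ⟨1 / 2, 1 / 2, by norm_num, by norm_num, by norm_num, by module⟩
  have heq : x + ε • w = x := mem_extremePoints_iff_left.1 hx |>.2 _ hε₁ _ hε₂ hmid
  exact (smul_eq_zero.1 (add_eq_left.1 heq)).resolve_left (ne_of_gt hε)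

lemma dotProduct_le_of_forall_mulVec_le [Finite ι] (hx : x ∈ polyhedron M b)
    (hopt : ∀ x' ∈ polyhedron M b, c ⬝ᵥ x' ≤ c ⬝ᵥ x) {z : κ → ℝ}
    (hwz : ∀ i, (M *ᵥ x) i = b i → (M *ᵥ w) i ≤ (M *ᵥ z) i) : c ⬝ᵥ w ≤ c ⬝ᵥ z := by
  have hmove : ∀ i, (M *ᵥ x) i = b i → (M *ᵥ (w - z)) i ≤ 0 := fun i hi ↦ by
    rw [mulVec_sub]
    exact sub_nonpos.2 (hwz i hi)
  obtain ⟨ε, hε, hε0⟩ :=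
    ((eventually_add_smul_mem_polyhedron hx hmove).and self_mem_nhdsWithin).exists
  have hle := hopt _ hε
  rw [dotProduct_add, dotProduct_smul, add_le_iff_nonpos_right, dotProduct_sub] at hle
  exact sub_nonpos.1 (nonpos_of_mul_nonpos_right hle hε0)

end LinearProgram

section IntegerProgram

/- By well-quasi-order `f` has no strictly increasing sequence of values on `S`, so a maximum is
attained although the values need be neither bounded nor discrete. -/
lemma exists_maximizer_minimalFor {α β γ : Type*} [Preorder β] [WellQuasiOrderedLE β]
    [LinearOrder γ] {S : Set α} (hS : S.Nonempty) (σ : α → β) (f : α → γ)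
    (hf : ∀ x ∈ S, ∀ y ∈ S, σ x ≤ σ y → f y ≤ f x) :
    ∃ z, MinimalFor (fun x ↦ x ∈ S ∧ ∀ w ∈ S, f w ≤ f x) σ z := by
  have hσ : S.PartiallyWellOrderedOn fun x y ↦ σ x ≤ σ y := fun g ↦
    wellQuasiOrdered_le fun k ↦ σ (g k)
  have himage : ((OrderDual.toDual ∘ f) '' S).IsPWO := hσ.image_of_monotone_on hf
  obtain ⟨z, hzS, hz⟩ := himage.exists_minimalFor _ _ hS
  exact exists_minimalFor_of_wellFoundedLT _ σ
    ⟨z, hzS, fun w hw ↦ (le_total (f w) (f z)).elim id (hz hw)⟩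

lemma intCast_mem_polyhedron_iff {ι κ : Type*} [Fintype κ] {A : Matrix ι κ ℤ} {b : ι → ℤ}
    {z : κ → ℤ} :
    (fun p ↦ (z p : ℝ)) ∈ polyhedron (realMatrix A) (fun i ↦ (b i : ℝ)) ↔ A *ᵥ z ≤ b :=
  forall_congr' fun i ↦ by rw [realMatrix_mulVec_intCast, Int.cast_le]

lemma intCast_mem_improvingMoves_iff {ι κ : Type*} [Fintype κ] {A : Matrix ι κ ℤ} {T : Set ι}
    {s : ι → ℤ} {u : κ → ℤ} :
    (fun p ↦ (u p : ℝ)) ∈ improvingMoves A T s ↔ A *ᵥ u ≤ s ∧ ∀ i ∈ T, 0 ≤ (A *ᵥ u) i := by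
  simp only [improvingMoves, Set.mem_ofPred_eq, realMatrix_mulVec_intCast, Int.cast_le,
    Int.cast_nonneg_iff, forall_and, Pi.le_def]

/- Among the integer optima, take one whose slack vector on the rows tight at `x` is minimal. -/
lemma exists_integer_optimum_forall_mem_improvingMoves_eq_zero {ι κ : Type*} [Finite ι] [Fintype κ]
    {A : Matrix ι κ ℤ} {b : ι → ℤ} {c x : κ → ℝ}
    (hx : x ∈ Set.extremePoints ℝ (polyhedron (realMatrix A) fun i ↦ (b i : ℝ)))
    (hopt : ∀ x' ∈ polyhedron (realMatrix A) (fun i ↦ (b i : ℝ)), c ⬝ᵥ x' ≤ c ⬝ᵥ x)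
    (hfeas : ∃ z : κ → ℤ, A *ᵥ z ≤ b) :
    ∃ z : κ → ℤ, A *ᵥ z ≤ b ∧
      (∀ w : κ → ℤ, A *ᵥ w ≤ b → c ⬝ᵥ (fun p ↦ (w p : ℝ)) ≤ c ⬝ᵥ fun p ↦ (z p : ℝ)) ∧
      ∀ u : κ → ℤ, (fun p ↦ (u p : ℝ)) ∈
        improvingMoves A {i | (realMatrix A *ᵥ x) i = b i} (b - A *ᵥ z) → u = 0 := by
  let T : Set ι := {i | (realMatrix A *ᵥ x) i = b i}
  let slack (z : κ → ℤ) (i : T) : ℕ := (b i - (A *ᵥ z) i).toNat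
  let value (z : κ → ℤ) : ℝ := c ⬝ᵥ fun p ↦ (z p : ℝ)
  have hvalue {z w : κ → ℤ} (h : ∀ i ∈ T, (A *ᵥ w) i ≤ (A *ᵥ z) i) : value w ≤ value z :=
    dotProduct_le_of_forall_mulVec_le hx.1 hopt fun i hi ↦ by
      rw [realMatrix_mulVec_intCast, realMatrix_mulVec_intCast]
      exact Int.cast_le.2 (h i hi)
  have hslack {z w : κ → ℤ} (hw : A *ᵥ w ≤ b) :
      slack z ≤ slack w ↔ ∀ i ∈ T, (A *ᵥ w) i ≤ (A *ᵥ z) i := by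
    refine Subtype.forall.trans (forall₂_congr fun i _ ↦ ?_)
    have hwi : (A *ᵥ w) i ≤ b i := hw i
    dsimp only [slack]
    omega
  obtain ⟨z, ⟨hz, hmax⟩, hmin⟩ := exists_maximizer_minimalFor (S := {z | A *ᵥ z ≤ b}) hfeas slack
    value fun _ _ _ hw hle ↦ hvalue ((hslack hw).1 hle)
  refine ⟨z, hz, hmax, fun u hu ↦ ?_⟩
  obtain ⟨hub, huT⟩ := intCast_mem_improvingMoves_iff.1 hu
  have hzu : A *ᵥ (z + u) ≤ b := by
    rw [mulVec_add]
    exact le_sub_iff_add_le'.1 hub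
  have hle : ∀ i ∈ T, (A *ᵥ z) i ≤ (A *ᵥ (z + u)) i := fun i hi ↦ by
    rw [mulVec_add]
    exact le_add_of_nonneg_right (huT i hi)
  have hge : ∀ i ∈ T, (A *ᵥ (z + u)) i ≤ (A *ᵥ z) i := (hslack hzu).1 <|
    hmin ⟨hzu, fun w hw ↦ (hmax w hw).trans (hvalue hle)⟩ ((hslack hz).2 hle)
  have hu0 : (fun p ↦ (u p : ℝ)) = 0 := eq_zero_of_mem_extremePoints_polyhedron hx fun i hi ↦ by
    have hAu := (hge i hi).antisymm (hle i hi)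
    rw [mulVec_add, Pi.add_apply, add_eq_left] at hAu
    rw [realMatrix_mulVec_intCast, hAu, Int.cast_zero]
  exact funext fun p ↦ Int.cast_eq_zero.1 (congrFun hu0 p)

end IntegerProgram

theorem stmt8_general {m n : ℕ} (hn : 2 ≤ n) (A : Matrix (Fin m) (Fin n) ℤ) (b : Fin m → ℤ)
    (c xs : Fin n → ℝ)
    (hvert : xs ∈ Set.extremePoints ℝ (polyhedron (realMatrix A) fun i ↦ (b i : ℝ)))
    (hopt : ∀ x ∈ polyhedron (realMatrix A) (fun i ↦ (b i : ℝ)), c ⬝ᵥ x ≤ c ⬝ᵥ xs)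
    (hfeas : ∃ z : Fin n → ℤ,
      (fun p ↦ (z p : ℝ)) ∈ polyhedron (realMatrix A) fun i ↦ (b i : ℝ)) :
    ∃ z : Fin n → ℤ, (fun p ↦ (z p : ℝ)) ∈ polyhedron (realMatrix A) (fun i ↦ (b i : ℝ)) ∧
      (∀ w : Fin n → ℤ, (fun p ↦ (w p : ℝ)) ∈ polyhedron (realMatrix A) (fun i ↦ (b i : ℝ)) →
        c ⬝ᵥ (fun p ↦ (w p : ℝ)) ≤ c ⬝ᵥ fun p ↦ (z p : ℝ)) ∧
      ‖xs - fun p ↦ (z p : ℝ)‖ < (n / 2 : ℝ) * maxMinor A (n - 1) := by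
  simp only [intCast_mem_polyhedron_iff] at hfeas ⊢
  obtain ⟨z, hz, hmax, hfree⟩ :=
    exists_integer_optimum_forall_mem_improvingMoves_eq_zero hvert hopt hfeas
  refine ⟨z, hz, hmax, ?_⟩
  obtain ⟨k, rfl⟩ := Nat.exists_eq_add_of_le' hn
  have hA : Function.Injective (realMatrix A).mulVec :=
    (injective_iff_map_eq_zero (realMatrix A).mulVecLin).2 fun w hw ↦
      eq_zero_of_mem_extremePoints_polyhedron hvert fun i _ ↦ congrFun hw i
  have hmove : xs - (fun p ↦ (z p : ℝ)) ∈
      improvingMoves A {i | (realMatrix A *ᵥ xs) i = b i} (b - A *ᵥ z) := fun i ↦ by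
    rw [mulVec_sub, Pi.sub_apply, realMatrix_mulVec_intCast, Pi.sub_apply, Int.cast_sub]
    exact ⟨sub_le_sub_right (hvert.1 i) _,
      fun hi ↦ sub_nonneg.2 ((Int.cast_le.2 (hz i)).trans_eq hi.symm)⟩
  have hpos : (0 : ℝ) < maxMinor A (k + 1) := Nat.cast_pos.2 (maxMinor_pos hA)
  refine (pi_norm_lt_iff (by positivity)).2 fun q ↦ ?_
  rw [Nat.cast_add, Nat.cast_two]
  exact abs_lt_half_mul_maxMinor hA (sub_nonneg.2 hz) hfree q hmove
    ((Submodule.finrank_le _).trans_eq (Module.finrank_fin_fun ℝ))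

/-- Main theorem: proximity bound `(n/2) · Δ_{n−1}(A)` for integral right-hand sides. -/
theorem stmt8 {m n : ℕ} (hn : 2 ≤ n) (A : Matrix (Fin m) (Fin n) ℤ)
    (hrank : (A.map (Int.cast : ℤ → ℚ)).rank = n)
    (b : Fin m → ℤ) (c : Fin n → ℚ)
    (P : Set (Fin n → ℝ))
    (hP : P = {x | ∀ i, (A.map (Int.cast : ℤ → ℝ)).mulVec x i ≤ (b i : ℝ)})
    (xs : Fin n → ℝ) (hxsP : xs ∈ P)
    (hvert : xs ∈ Set.extremePoints ℝ P)
    (hopt : ∀ x ∈ P, ∑ i, (c i : ℝ) * x i ≤ ∑ i, (c i : ℝ) * xs i)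
    (hfeas : ∃ z : Fin n → ℤ, (fun i => (z i : ℝ)) ∈ P) :
    ∃ z : Fin n → ℤ, (fun i => (z i : ℝ)) ∈ P ∧
      (∀ w : Fin n → ℤ, (fun i => (w i : ℝ)) ∈ P →
        ∑ i, (c i : ℝ) * (w i : ℝ) ≤ ∑ i, (c i : ℝ) * (z i : ℝ)) ∧
      ‖(fun i => xs i - (z i : ℝ))‖ < ((n : ℝ) / 2) * (maxMinor A (n - 1) : ℝ) := by
  subst hP
  exact stmt8_general hn A b (fun i ↦ c i) xs hvert hopt hfeas
end

section
/- Let Δ ≥ 1 and n ≥ 2. Suppose A = TB ∈ ℤ^{m×n} with T totally unimodular and B ∈ ℤ^{n×n} with |det B| = Δ, b ∈ ℤ^m, c ∈ ℚⁿ, and the integer program max{cᵀx : Ax ≤ b, x ∈ ℤⁿ} is feasible. Then for every optimal vertex x* of the LP max{cᵀx : Ax ≤ b}, there is an optimal integral solution z* with ‖x* − z*‖_∞ ≤ max{Δ_{n−1}(A), Δ_n(A)} − 1. -/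
open Matrix

/-!
Substituting `y = B x` turns `A x ≤ b` into `T y ≤ b`, whose vertex `y* = B x*` is integral because
`T` is totally unimodular. For a feasible integral `z`, write `B z - y*` as a sum of integral
elementary vectors of `T` (edge directions of the arrangement of its rows) whose images under `T`
are sign-conformal to `T (B z - y*)`; any subfamily can then be added to `y*` or removed from `B z`
without violating `T y ≤ b`. The lattice `B ℤⁿ` has index `|det B|` in `ℤⁿ`, so by the pigeonhole
principle any `|det B|` of these vectors contain a nonempty subfamily with sum `B q`. As `x* + q` is
feasible, optimality of `x*` gives `cᵀ q ≤ 0`, and replacing `z` by `z - q` does not decrease the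
objective. Hence at most `|det B| - 1` vectors need to remain, and by Cramer's rule each contributes
at most `Δ_{n-1}(A) / |det B|` to every coordinate of `z - x*`, since `adj(B) v` is, up to sign, a
column of the adjugate of an `n × n` submatrix of `A = T B`. This gives the bound
`(1 - 1 / |det B|) Δ_{n-1}(A)`, which is at most `max{Δ_{n-1}(A), Δ_n(A)} - 1`
because `|det B| ≤ Δ_n(A)`.
-/

section IntCast

theorem map_intCast_mulVec {m n : Type*} [Fintype n] (M : Matrix m n ℤ) (v : n → ℤ) :
    M.map (Int.cast : ℤ → ℝ) *ᵥ (fun j ↦ (v j : ℝ)) = fun i ↦ (((M *ᵥ v) i : ℤ) : ℝ) := by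
  ext i
  exact (RingHom.map_mulVec (Int.castRingHom ℝ) M v i).symm

theorem map_intCast_mul_mulVec {l m n : Type*} [Fintype m] [Fintype n] (M : Matrix l m ℤ)
    (N : Matrix m n ℤ) (x : n → ℝ) : (M * N).map (Int.cast : ℤ → ℝ) *ᵥ x =
      M.map (Int.cast : ℤ → ℝ) *ᵥ (N.map (Int.cast : ℤ → ℝ) *ᵥ x) := by
  rw [mulVec_mulVec]
  exact congrArg (· *ᵥ x) (Matrix.map_mul (f := Int.castRingHom ℝ))

theorem map_intCast_mulVec_le_iff {m n : Type*} [Fintype n] {A : Matrix m n ℤ} {z : n → ℤ}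
    {b : m → ℤ} : (A.map (Int.cast : ℤ → ℝ) *ᵥ (fun j ↦ (z j : ℝ)) ≤ fun i ↦ (b i : ℝ)) ↔
      A *ᵥ z ≤ b := by
  simp only [map_intCast_mulVec, Pi.le_def, Int.cast_le]

variable {n : Type*} [Fintype n] [DecidableEq n]

theorem det_map_intCast (M : Matrix n n ℤ) : (M.map (Int.cast : ℤ → ℝ)).det = M.det :=
  (Int.cast_det M).symm

theorem adjugate_map_intCast (M : Matrix n n ℤ) :
    (M.map (Int.cast : ℤ → ℝ)).adjugate = M.adjugate.map (Int.cast : ℤ → ℝ) :=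
  ((Int.castRingHom ℝ).map_adjugate M).symm

end IntCast

section Submatrix

variable {m n R K : Type*} [Fintype n] [DecidableEq n] [CommRing R] [Field K]

theorem adjugate_mulVec_mulVec (M : Matrix n n R) (v : n → R) :
    M.adjugate *ᵥ (M *ᵥ v) = M.det • v := by
  rw [mulVec_mulVec, adjugate_mul, smul_mulVec, one_mulVec]

theorem det_mul_submatrix (T : Matrix m n R) (B : Matrix n n R) (r : n → m) :
    ((T * B).submatrix r id).det = (T.submatrix r id).det * B.det :=
  det_mul (T.submatrix r id) B

theorem injective_of_det_submatrix_ne_zero {T : Matrix m n R} {r : n → m}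
    (hr : (T.submatrix r id).det ≠ 0) : Function.Injective r := fun j k hjk ↦ by
  by_contra hne
  exact hr (det_zero_of_row_eq hne (congrArg T hjk))

theorem mulVec_injective_of_det_submatrix_ne_zero [IsDomain R] {T : Matrix m n R} {r : n → m}
    (hr : (T.submatrix r id).det ≠ 0) : Function.Injective T.mulVec := by
  rw [← coe_mulVecLin, injective_iff_map_eq_zero]
  exact fun v hv ↦ eq_zero_of_mulVec_eq_zero hr (funext fun j ↦ congrFun hv (r j))

theorem mul_adjugate_submatrix_apply (T : Matrix m n R) (r : n → m) (i : m) (j : n) :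
    (T * (T.submatrix r id).adjugate) i j = (T.submatrix (Function.update r j i) id).det := by
  have hrow : T.submatrix (Function.update r j i) id = (T.submatrix r id).updateRow j (T i) := by
    ext k l
    rcases eq_or_ne k j with rfl | hk <;> simp [*]
  rw [hrow, ← cramer_transpose_apply, cramer_eq_adjugate_mulVec, ← adjugate_transpose,
    mulVec_transpose]
  rfl

theorem exists_det_submatrix_ne_zero [Finite m] {T : Matrix m n K} {S : Set m}
    (hS : ∀ w, (∀ i ∈ S, (T *ᵥ w) i = 0) → w = 0) :
    ∃ r : n → m, (∀ j, r j ∈ S) ∧ (T.submatrix r id).det ≠ 0 := by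
  set R : Matrix S n K := T.submatrix Subtype.val id
  have hR : Function.Injective R.mulVec := by
    rw [← coe_mulVecLin, injective_iff_map_eq_zero]
    exact fun w hw ↦ hS w fun i hi ↦ congrFun hw ⟨i, hi⟩
  have hspan : Submodule.span K (Set.range R.row) = ⊤ := by
    apply Submodule.eq_top_of_finrank_eq
    rw [← rank_eq_finrank_span_row, rank, ← LinearMap.finrank_range_of_inj (f := R.mulVecLin) hR]
  obtain ⟨κ, a, -, ha, hli⟩ := exists_linearIndependent' K R.row
  let e : n ≃ κ := (Pi.basisFun K n).indexEquiv (.mk hli (by rw [ha, hspan]))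
  refine ⟨fun j ↦ a (e j), fun j ↦ (a (e j)).2, ?_⟩
  rw [← isUnit_iff_ne_zero, ← isUnit_iff_isUnit_det, ← linearIndependent_rows_iff_isUnit]
  exact hli.comp e e.injective

theorem exists_submatrix_mulVec_eq_single [Finite m] {T : Matrix m n K}
    (hT : Function.Injective T.mulVec) {w : n → K} (hw : w ≠ 0)
    (hline : ∀ x, (∀ i, (T *ᵥ w) i = 0 → (T *ᵥ x) i = 0) → ∃ t : K, x = t • w) :
    ∃ r : n → m, (T.submatrix r id).det ≠ 0 ∧
      ∃ (j : n) (a : K), T.submatrix r id *ᵥ w = Pi.single j a := by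
  obtain ⟨i₀, hi₀⟩ : ∃ i, (T *ᵥ w) i ≠ 0 :=
    Function.ne_iff.mp fun h ↦ hw (hT (h.trans (mulVec_zero T).symm))
  -- the rows vanishing at `w` cut out its line; one further row makes the system nonsingular
  obtain ⟨r, hrS, hr⟩ := exists_det_submatrix_ne_zero (T := T) (S := {i | (T *ᵥ w) i ≠ 0 → i = i₀})
    fun x hx ↦ by
      obtain ⟨t, rfl⟩ := hline x fun i hi ↦ hx i fun h ↦ absurd hi h
      have h₀ := hx i₀ fun _ ↦ rfl
      rw [mulVec_smul, Pi.smul_apply, smul_eq_zero_iff_left hi₀] at h₀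
      rw [h₀, zero_smul]
  obtain ⟨j, hj⟩ : ∃ j, (T *ᵥ w) (r j) ≠ 0 := by
    by_contra! h
    exact hw (eq_zero_of_mulVec_eq_zero hr (funext h))
  refine ⟨r, hr, j, (T *ᵥ w) (r j), funext fun k ↦ ?_⟩
  rcases eq_or_ne k j with rfl | hk
  · rw [Pi.single_eq_same]; rfl
  · rw [Pi.single_eq_of_ne hk]
    by_contra hkw
    exact hk (injective_of_det_submatrix_ne_zero hr ((hrS k hkw).trans (hrS j hj).symm))

end Submatrix

section SignConformal

variable {m R : Type*}

/-- `a` is sign-conformal to `b`: no coordinate of `a` has a sign opposite to that of `b`, and `a`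
vanishes wherever `b` does. Decomposing a vector into sign-conformal summands prevents
cancellation, so that every partial sum stays between `0` and the whole. -/
def SignConformal [Zero R] [LE R] (a b : m → R) : Prop :=
  ∀ i, (0 ≤ b i → 0 ≤ a i) ∧ (b i ≤ 0 → a i ≤ 0)

theorem SignConformal.trans [Zero R] [LE R] {a b c : m → R} (hab : SignConformal a b)
    (hbc : SignConformal b c) : SignConformal a c :=
  fun i ↦ ⟨(hab i).1 ∘ (hbc i).1, (hab i).2 ∘ (hbc i).2⟩

theorem SignConformal.eq_zero [Zero R] [PartialOrder R] {a b : m → R} (hab : SignConformal a b)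
    {i : m} (hi : b i = 0) : a i = 0 :=
  le_antisymm ((hab i).2 hi.le) ((hab i).1 hi.ge)

theorem SignConformal.add [AddMonoid R] [Preorder R] [AddLeftMono R]
    {a a' b : m → R} (ha : SignConformal a b) (ha' : SignConformal a' b) :
    SignConformal (a + a') b :=
  fun i ↦ ⟨fun h ↦ add_nonneg ((ha i).1 h) ((ha' i).1 h),
    fun h ↦ add_nonpos ((ha i).2 h) ((ha' i).2 h)⟩

theorem SignConformal.mulVec_multiset_sum {n : Type*} [NonUnitalNonAssocSemiring R] [Preorder R]
    [AddLeftMono R] [Fintype n] {T : Matrix m n R} {s : Multiset (n → R)}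
    {b : m → R} (hs : ∀ v ∈ s, SignConformal (T *ᵥ v) b) : SignConformal (T *ᵥ s.sum) b :=
  Multiset.sum_induction (fun v ↦ SignConformal (T *ᵥ v) b) s
    (fun v w hv hw ↦ by simpa only [mulVec_add] using hv.add hw) (by simp [SignConformal]) hs

theorem SignConformal.add_le [AddCommGroup R] [LinearOrder R] [IsOrderedAddMonoid R]
    {a a' x b : m → R} (ha : SignConformal a (a + a')) (ha' : SignConformal a' (a + a'))
    (hx : x ≤ b) (hxa : x + (a + a') ≤ b) : x + a ≤ b := fun i ↦ by
  rcases le_total 0 ((a + a') i) with h | h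
  · refine (add_le_add_right ?_ (x i)).trans (hxa i)
    exact le_add_of_nonneg_right ((ha' i).1 h)
  · exact (add_le_of_nonpos_right ((ha i).2 h)).trans (hx i)

theorem SignConformal.sub_of_abs_le_one {a b : m → ℤ} (hab : SignConformal a b)
    (ha : ∀ i, |a i| ≤ 1) : SignConformal (b - a) b := fun i ↦ by
  have := abs_le.mp (ha i)
  have := hab i
  have := hab.eq_zero (i := i)
  simp only [Pi.sub_apply]
  omega

theorem SignConformal.sum_natAbs_sub_lt [Fintype m] {a b : m → ℤ} (hab : SignConformal a b)
    (ha : ∀ i, |a i| ≤ 1) (ha₀ : a ≠ 0) :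
    ∑ i, ((b - a) i).natAbs < ∑ i, (b i).natAbs := by
  have hsplit (i) : ((b - a) i).natAbs + (a i).natAbs = (b i).natAbs := by
    have := abs_le.mp (ha i)
    have := hab i
    have := hab.eq_zero (i := i)
    simp only [Pi.sub_apply]
    omega
  obtain ⟨i, hi⟩ := Function.ne_iff.mp ha₀
  have hlt : ((b - a) i).natAbs < (b i).natAbs := by
    rw [← hsplit i]
    exact Nat.lt_add_of_pos_right (Int.natAbs_pos.mpr hi)
  exact Finset.sum_lt_sum (fun i _ ↦ (hsplit i).symm ▸ Nat.le_add_right _ _)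
    ⟨i, Finset.mem_univ i, hlt⟩

variable {K : Type*} [Field K] [LinearOrder K] [IsStrictOrderedRing K]

theorem exists_signConformal_sub_smul [Finite m] (a : m → K) {b : m → K} (hb : b ≠ 0) :
    ∃ t : K, SignConformal (a - t • b) a ∧ ∃ i, b i ≠ 0 ∧ (a - t • b) i = 0 := by
  obtain ⟨i, hi, hmin⟩ := Set.exists_min_image {i | b i ≠ 0} (fun i ↦ |a i / b i|) (Set.toFinite _)
    (Function.ne_iff.mp hb)
  refine ⟨a i / b i, fun j ↦ ?_, i, hi, ?_⟩
  · have hle : |a i / b i * b j| ≤ |a j| := by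
      rcases eq_or_ne (b j) 0 with hj | hj
      · simp [hj]
      · rw [abs_mul, ← le_div_iff₀ (abs_pos.mpr hj), ← abs_div]
        exact hmin j hj
    simp only [Pi.sub_apply, Pi.smul_apply, smul_eq_mul, sub_nonneg, sub_nonpos]
    refine ⟨fun h ↦ ?_, fun h ↦ ?_⟩
    · exact (le_abs_self _).trans (hle.trans_eq (abs_of_nonneg h))
    · simpa [abs_of_nonpos h] using (neg_abs_le _).trans' (neg_le_neg hle)
  · simp [div_mul_cancel₀ _ hi]

theorem exists_signConformal_forall_exists_eq_smul [Finite m] {n : Type*} [Fintype n]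
    {T : Matrix m n K} (hT : Function.Injective T.mulVec) {u : n → K} (hu : u ≠ 0) :
    ∃ w ≠ 0, SignConformal (T *ᵥ w) (T *ᵥ u) ∧
      ∀ x, (∀ i, (T *ᵥ w) i = 0 → (T *ᵥ x) i = 0) → ∃ t : K, x = t • w := by
  obtain ⟨w, ⟨hw, hwu⟩, hmin⟩ := exists_minimalFor_of_wellFoundedLT
    (fun w ↦ w ≠ 0 ∧ SignConformal (T *ᵥ w) (T *ᵥ u)) (fun w ↦ Function.support (T *ᵥ w))
    ⟨u, hu, fun i ↦ ⟨id, id⟩⟩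
  refine ⟨w, hw, hwu, fun x hx ↦ ?_⟩
  -- otherwise moving from `w` along `x` until a coordinate of `T w` vanishes shrinks the support
  by_contra! hxw
  have hTx : T *ᵥ x ≠ 0 := fun h ↦ hxw 0 (hT (by simp [h]))
  obtain ⟨t, hconf, i, hi, hi0⟩ := exists_signConformal_sub_smul (T *ᵥ w) hTx
  rw [← mulVec_smul, ← mulVec_sub] at hconf hi0
  have hne : w - t • x ≠ 0 := by
    rw [sub_ne_zero]
    rintro rfl
    have ht : t ≠ 0 := left_ne_zero_of_smul hw
    exact hxw t⁻¹ (inv_smul_smul₀ ht x).symm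
  have hsub := hmin ⟨hne, hconf.trans hwu⟩ fun j hj h ↦ hj (hconf.eq_zero h)
  exact hsub (mt (hx i) hi) hi0

end SignConformal

section ElementaryVector

variable {m n : Type*} [Fintype n] [DecidableEq n] {T : Matrix m n ℤ}

/-- Elementary vectors of `T`: up to sign, the columns of the adjugates of the submatrices formed by
`n` distinct rows of `T`. If the submatrix is invertible, such a column spans the line on which
`n - 1` of its rows vanish; using the adjugate instead of the inverse keeps the vector integral. A
singular submatrix is not excluded, so `0` may be elementary. -/
def IsElementaryVector (T : Matrix m n ℤ) (v : n → ℤ) : Prop :=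
  ∃ r : n → m, Function.Injective r ∧
    ∃ (j : n) (ε : ℤˣ), v = (T.submatrix r id).adjugate *ᵥ Pi.single j (ε : ℤ)

theorem IsElementaryVector.abs_mulVec_apply_le_one (hT : T.IsTotallyUnimodular) {v : n → ℤ}
    (hv : IsElementaryVector T v) (i : m) : |(T *ᵥ v) i| ≤ 1 := by
  obtain ⟨r, -, j, ε, rfl⟩ := hv
  obtain ⟨s, hs⟩ := (isTotallyUnimodular_iff_fintype T).mp hT n (Function.update r j i) id
  rw [mulVec_mulVec, mulVec_single, Pi.smul_apply, col_apply, mul_adjugate_submatrix_apply, ← hs]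
  rcases Int.units_eq_one_or ε with rfl | rfl <;> cases s <;> simp

theorem exists_pos_smul_eq_of_submatrix_mulVec_eq_single {r : n → m}
    (hr : (T.submatrix r id).det ≠ 0) {w : n → ℝ} (hw : w ≠ 0) {j : n} {a : ℝ}
    (h : (T.submatrix r id).map (Int.cast : ℤ → ℝ) *ᵥ w = Pi.single j a) :
    ∃ v, IsElementaryVector T v ∧ ∃ t : ℝ, 0 < t ∧ w = t • fun k ↦ (v k : ℝ) := by
  set Q := T.submatrix r id
  obtain ⟨ε, hε⟩ : ∃ ε : ℤˣ, a / Q.det = |a / Q.det| * ((ε : ℤ) : ℝ) := by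
    rcases abs_choice (a / Q.det) with h | h
    · exact ⟨1, by simp [h]⟩
    · exact ⟨-1, by simp [h]⟩
  have hcramer : (Q.det : ℝ) • w = Q.adjugate.map (Int.cast : ℤ → ℝ) *ᵥ Pi.single j a := by
    rw [← h, ← adjugate_map_intCast, adjugate_mulVec_mulVec, det_map_intCast]
  have hwv : w = |a / Q.det| • fun k ↦ ((Q.adjugate *ᵥ Pi.single j (ε : ℤ)) k : ℝ) := by
    have hdet : (Q.det : ℝ) ≠ 0 := Int.cast_ne_zero.mpr hr
    rw [← inv_smul_smul₀ hdet w, hcramer]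
    ext k
    simp only [Pi.smul_apply, smul_eq_mul, mulVec_single, op_smul_eq_smul, col_apply,
      map_apply, Int.cast_mul]
    linear_combination (Q.adjugate k j : ℝ) * hε
  refine ⟨_, ⟨r, injective_of_det_submatrix_ne_zero hr, j, ε, rfl⟩, |a / Q.det|, ?_, hwv⟩
  exact (abs_nonneg _).lt_of_ne' fun h₀ ↦ hw (by rw [hwv, h₀, zero_smul])

theorem exists_isElementaryVector_signConformal [Finite m]
    (hT : Function.Injective (T.map (Int.cast : ℤ → ℝ)).mulVec) {u : n → ℤ} (hu : u ≠ 0) :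
    ∃ v, IsElementaryVector T v ∧ T *ᵥ v ≠ 0 ∧ SignConformal (T *ᵥ v) (T *ᵥ u) := by
  have huR : (fun j ↦ (u j : ℝ)) ≠ 0 := fun h ↦ hu (funext fun j ↦ by simpa using congrFun h j)
  obtain ⟨w, hw, hwu, hline⟩ := exists_signConformal_forall_exists_eq_smul hT huR
  obtain ⟨r, hr, j, a, hrw⟩ := exists_submatrix_mulVec_eq_single hT hw hline
  rw [submatrix_map, det_map_intCast, Int.cast_ne_zero] at hr
  obtain ⟨v, hv, t, ht, rfl⟩ := exists_pos_smul_eq_of_submatrix_mulVec_eq_single hr hw hrw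
  have hTv : T.map (Int.cast : ℤ → ℝ) *ᵥ (t • fun k ↦ (v k : ℝ)) =
      fun i ↦ t * ((T *ᵥ v) i : ℤ) := by
    rw [mulVec_smul, map_intCast_mulVec]
    rfl
  refine ⟨v, hv, fun h ↦ hw (hT ?_), fun i ↦ ?_⟩
  · rw [hTv, mulVec_zero]
    simp [h, Pi.zero_def]
  · simpa [SignConformal, hTv, map_intCast_mulVec, mul_nonneg_iff_of_pos_left ht,
      mul_nonpos_iff_pos_imp_nonpos, ht, ht.le, ht.not_ge] using hwu i

theorem exists_multiset_isElementaryVector [Finite m] (hT : T.IsTotallyUnimodular)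
    (hinj : Function.Injective (T.map (Int.cast : ℤ → ℝ)).mulVec) (u : n → ℤ) :
    ∃ s : Multiset (n → ℤ), s.sum = u ∧
      ∀ v ∈ s, IsElementaryVector T v ∧ SignConformal (T *ᵥ v) (T *ᵥ u) := by
  have := Fintype.ofFinite m
  induction hk : ∑ i, ((T *ᵥ u) i).natAbs using Nat.strong_induction_on generalizing u with
  | _ k ih =>
    subst hk
    rcases eq_or_ne u 0 with rfl | hu
    · exact ⟨0, by simp⟩
    obtain ⟨v, hv, hv₀, hvu⟩ := exists_isElementaryVector_signConformal hinj hu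
    have hle := hv.abs_mulVec_apply_le_one hT
    have hlt := hvu.sum_natAbs_sub_lt hle hv₀
    have hsub := hvu.sub_of_abs_le_one hle
    rw [← mulVec_sub] at hlt hsub
    obtain ⟨s, hs, hsu⟩ := ih _ hlt (u - v) rfl
    refine ⟨v ::ₘ s, by rw [Multiset.sum_cons, hs, add_sub_cancel], fun w hw ↦ ?_⟩
    rcases Multiset.mem_cons.mp hw with rfl | hw
    · exact ⟨hv, hvu⟩
    · exact ⟨(hsu w hw).1, (hsu w hw).2.trans hsub⟩

end ElementaryVector

section Pigeonhole

variable {G : Type*} [AddCommGroup G] (H : AddSubgroup G) [H.FiniteIndex]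

theorem exists_le_sum_mem_of_index_le_card {s : Multiset G} (hs : H.index ≤ s.card) :
    ∃ t ≤ s, t ≠ 0 ∧ t.sum ∈ H := by
  obtain ⟨l, rfl⟩ := Quot.exists_rep s
  -- two prefix sums of an enumeration of `s` agree modulo `H`
  have hcard : Nat.card (G ⧸ H) < Nat.card (Fin (l.length + 1)) := by
    simpa [AddSubgroup.index] using Nat.lt_succ_of_le hs
  obtain ⟨i, j, hij, heq⟩ : ∃ i j : Fin (l.length + 1), i < j ∧
      ((l.take i).sum : G ⧸ H) = (l.take j).sum := by
    have := Fintype.ofFinite (G ⧸ H)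
    rw [Nat.card_eq_fintype_card, Nat.card_eq_fintype_card] at hcard
    obtain ⟨i, j, hij, h⟩ := Fintype.exists_ne_map_eq_of_card_lt
      (fun i : Fin (l.length + 1) ↦ ((l.take i).sum : G ⧸ H)) hcard
    rcases hij.lt_or_gt with hlt | hlt
    · exact ⟨i, j, hlt, h⟩
    · exact ⟨j, i, hlt, h.symm⟩
  refine ⟨((l.take j).drop i : List G), ?_, ?_, ?_⟩
  · exact ((List.drop_sublist _ _).trans (List.take_sublist _ _)).subperm
  · rw [Ne, Multiset.coe_eq_zero, List.drop_eq_nil_iff, List.length_take]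
    omega
  · have hsplit := (l.take j).sum_take_add_sum_drop i
    rw [List.take_take, min_eq_left (Fin.val_fin_le.mpr hij.le)] at hsplit
    rw [QuotientAddGroup.eq, ← hsplit, neg_add_cancel_left] at heq
    simpa using heq

theorem exists_add_eq_card_lt_index_sum_mem (s : Multiset G) :
    ∃ t t', t + t' = s ∧ t.card < H.index ∧ t'.sum ∈ H := by
  induction s using Multiset.strongInductionOn with
  | ih s ih =>
    rcases lt_or_ge s.card H.index with hlt | hge
    · exact ⟨s, 0, add_zero s, hlt, H.zero_mem⟩
    obtain ⟨p, hps, hp₀, hp⟩ := exists_le_sum_mem_of_index_le_card H hge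
    obtain ⟨q, rfl⟩ := Multiset.le_iff_exists_add.mp hps
    obtain ⟨t, t', rfl, hlt, ht'⟩ := ih q (lt_add_of_pos_left q (pos_iff_ne_zero.mpr hp₀))
    refine ⟨t, p + t', add_left_comm _ _ _, hlt, ?_⟩
    rw [Multiset.sum_add]
    exact H.add_mem hp ht'

theorem index_range_eq_natAbs_det {M : Type*} [AddCommGroup M] [Module.Free ℤ M]
    [Module.Finite ℤ M] {f : M →ₗ[ℤ] M} (hf : Function.Injective f) :
    f.range.toAddSubgroup.index = (LinearMap.det f).natAbs :=
  (Submodule.natAbs_det_equiv f.range (LinearEquiv.ofInjective f hf)).symm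

end Pigeonhole

theorem exists_feasible_exchange {m n : Type*} [Finite m] [Fintype n] [DecidableEq n]
    {T : Matrix m n ℤ} (hT : T.IsTotallyUnimodular)
    (hinj : Function.Injective (T.map (Int.cast : ℤ → ℝ)).mulVec) {B : Matrix n n ℤ}
    (hB : B.det ≠ 0) {b : m → ℤ} {y z : n → ℤ} (hy : T *ᵥ y ≤ b) (hz : T *ᵥ (B *ᵥ z) ≤ b) :
    ∃ (q : n → ℤ) (t : Multiset (n → ℤ)), T *ᵥ (y + B *ᵥ q) ≤ b ∧ T *ᵥ (B *ᵥ (z - q)) ≤ b ∧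
      B *ᵥ (z - q) = y + t.sum ∧ t.card < B.det.natAbs ∧ ∀ v ∈ t, IsElementaryVector T v := by
  obtain ⟨s, hs, hsT⟩ := exists_multiset_isElementaryVector hT hinj (B *ᵥ z - y)
  have hindex : B.mulVecLin.range.toAddSubgroup.index = B.det.natAbs := by
    rw [index_range_eq_natAbs_det, ← toLin'_apply', LinearMap.det_toLin']
    exact mulVec_injective_of_det_submatrix_ne_zero (r := id) hB
  have : B.mulVecLin.range.toAddSubgroup.FiniteIndex := ⟨by rwa [hindex, Int.natAbs_ne_zero]⟩
  obtain ⟨t, t', rfl, hcard, q, hq⟩ :=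
    exists_add_eq_card_lt_index_sum_mem B.mulVecLin.range.toAddSubgroup s
  rw [mulVecLin_apply] at hq
  rw [Multiset.sum_add, ← hq] at hs
  have hTs : T *ᵥ t.sum + T *ᵥ (B *ᵥ q) = T *ᵥ (B *ᵥ z - y) := by rw [← mulVec_add, hs]
  have ht : SignConformal (T *ᵥ t.sum) (T *ᵥ t.sum + T *ᵥ (B *ᵥ q)) :=
    hTs ▸ .mulVec_multiset_sum fun v hv ↦ (hsT v (Multiset.mem_add.mpr (.inl hv))).2
  have ht' : SignConformal (T *ᵥ (B *ᵥ q)) (T *ᵥ t.sum + T *ᵥ (B *ᵥ q)) :=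
    hTs ▸ hq ▸ .mulVec_multiset_sum fun v hv ↦ (hsT v (Multiset.mem_add.mpr (.inr hv))).2
  have hyz : T *ᵥ y + (T *ᵥ t.sum + T *ᵥ (B *ᵥ q)) ≤ b := by
    rwa [hTs, ← mulVec_add, add_sub_cancel]
  have hzq : B *ᵥ (z - q) = y + t.sum := by
    rw [mulVec_sub, sub_eq_iff_eq_add, add_assoc, hs, add_sub_cancel]
  refine ⟨q, t, ?_, ?_, hzq, hindex ▸ hcard, fun v hv ↦ (hsT v (Multiset.mem_add.mpr (.inl hv))).1⟩
  · rw [mulVec_add]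
    rw [add_comm (T *ᵥ t.sum)] at ht ht' hyz
    exact ht'.add_le ht hy hyz
  · rw [hzq, mulVec_add]
    exact ht.add_le ht' hy hyz

section MaxMinor

variable {m n : ℕ}

theorem natAbs_det_submatrix_le_maxMinor (A : Matrix (Fin m) (Fin n) ℤ) {k : ℕ} {r : Fin k → Fin m}
    {s : Fin k → Fin n} (hr : Function.Injective r) (hs : Function.Injective s) :
    (A.submatrix r s).det.natAbs ≤ maxMinor A k :=
  Finset.le_sup (f := fun p : (Fin k → Fin m) × (Fin k → Fin n) ↦ (A.submatrix p.1 p.2).det.natAbs)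
    (b := (r, s)) (by simp [hr, hs])

theorem natAbs_det_le_maxMinor_mul {T : Matrix (Fin m) (Fin n) ℤ} {B : Matrix (Fin n) (Fin n) ℤ}
    {r : Fin n → Fin m} (hr : ((T * B).submatrix r id).det ≠ 0) :
    B.det.natAbs ≤ maxMinor (T * B) n := by
  have hdvd : B.det ∣ ((T * B).submatrix r id).det :=
    det_mul_submatrix T B r ▸ dvd_mul_left _ _
  exact (Nat.le_of_dvd (Int.natAbs_pos.mpr hr) (Int.natAbs_dvd_natAbs.mpr hdvd)).trans
    (natAbs_det_submatrix_le_maxMinor _ (injective_of_det_submatrix_ne_zero hr)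
      Function.injective_id)

theorem abs_adjugate_submatrix_apply_le_maxMinor (A : Matrix (Fin m) (Fin (n + 1)) ℤ)
    {r : Fin (n + 1) → Fin m} (hr : Function.Injective r) (i j : Fin (n + 1)) :
    |(A.submatrix r id).adjugate i j| ≤ maxMinor A n := by
  rw [adjugate_fin_succ_eq_det_submatrix, abs_mul, abs_neg_one_pow, one_mul, submatrix_submatrix,
    Int.abs_eq_natAbs, Nat.cast_le]
  exact natAbs_det_submatrix_le_maxMinor A (hr.comp Fin.succAbove_right_injective)
    Fin.succAbove_right_injective

variable {T : Matrix (Fin m) (Fin (n + 1)) ℤ} {t : Multiset (Fin (n + 1) → ℤ)}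

theorem IsElementaryVector.abs_adjugate_mulVec_le_maxMinor {v : Fin (n + 1) → ℤ}
    (hv : IsElementaryVector T v) (B : Matrix (Fin (n + 1)) (Fin (n + 1)) ℤ)
    (k : Fin (n + 1)) : |(B.adjugate *ᵥ v) k| ≤ maxMinor (T * B) n := by
  obtain ⟨r, hr, j, ε, rfl⟩ := hv
  have hTB : T.submatrix r id * B = (T * B).submatrix r id := rfl
  rw [mulVec_mulVec, ← adjugate_mul_distrib, hTB, mulVec_single, Pi.smul_apply, col_apply]
  have := abs_adjugate_submatrix_apply_le_maxMinor (T * B) hr k j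
  rcases Int.units_eq_one_or ε with rfl | rfl <;> simpa

theorem abs_adjugate_mulVec_sum_le (ht : ∀ v ∈ t, IsElementaryVector T v)
    (B : Matrix (Fin (n + 1)) (Fin (n + 1)) ℤ) (k : Fin (n + 1)) :
    |(B.adjugate *ᵥ t.sum) k| ≤ t.card * maxMinor (T * B) n := by
  let φ : (Fin (n + 1) → ℤ) →+ ℤ :=
    ((LinearMap.proj k).comp B.adjugate.mulVecLin).toAddMonoidHom
  calc |φ t.sum| = |(t.map φ).sum| := by rw [map_multiset_sum]
    _ ≤ ((t.map φ).map abs).sum := Multiset.abs_sum_le_sum_abs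
    _ ≤ t.card • (maxMinor (T * B) n : ℤ) := by
      rw [Multiset.map_map, ← Multiset.card_map (abs ∘ φ)]
      refine Multiset.sum_le_card_nsmul _ _ fun a ha ↦ ?_
      obtain ⟨v, hv, rfl⟩ := Multiset.mem_map.mp ha
      exact (ht v hv).abs_adjugate_mulVec_le_maxMinor B k
    _ = t.card * maxMinor (T * B) n := nsmul_eq_mul _ _

theorem abs_det_mul_abs_sub_le {B : Matrix (Fin (n + 1)) (Fin (n + 1)) ℤ}
    {x : Fin (n + 1) → ℝ} {y z : Fin (n + 1) → ℤ}
    (hx : B.map (Int.cast : ℤ → ℝ) *ᵥ x = fun i ↦ (y i : ℝ)) (hz : B *ᵥ z = y + t.sum)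
    (ht : ∀ v ∈ t, IsElementaryVector T v) (k : Fin (n + 1)) :
    |(B.det : ℝ)| * |x k - z k| ≤ t.card * maxMinor (T * B) n := by
  have hBz : B.map (Int.cast : ℤ → ℝ) *ᵥ ((fun i ↦ (z i : ℝ)) - x) = fun i ↦ (t.sum i : ℝ) := by
    rw [mulVec_sub, map_intCast_mulVec, hx, hz]
    ext i
    simp
  have hcramer := adjugate_mulVec_mulVec (B.map (Int.cast : ℤ → ℝ)) ((fun i ↦ (z i : ℝ)) - x)
  rw [hBz, adjugate_map_intCast, map_intCast_mulVec, det_map_intCast] at hcramer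
  have hk : ((B.adjugate *ᵥ t.sum) k : ℝ) = B.det * (z k - x k) := congrFun hcramer k
  rw [abs_sub_comm, ← abs_mul, ← hk]
  exact_mod_cast abs_adjugate_mulVec_sum_le ht B k

end MaxMinor

section Vertex

variable {m n : Type*} [Fintype n]

theorem eq_zero_of_mem_extremePoints [Finite m] {A : Matrix m n ℝ} {b : m → ℝ} {x : n → ℝ}
    (hx : x ∈ Set.extremePoints ℝ {x | A *ᵥ x ≤ b}) {w : n → ℝ}
    (hw : ∀ i, (A *ᵥ x) i = b i → (A *ᵥ w) i = 0) : w = 0 := by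
  have hmem : ∀ᶠ ε in nhds (0 : ℝ), A *ᵥ (x + ε • w) ≤ b := by
    simp only [Pi.le_def, Filter.eventually_all]
    intro i
    rcases (hx.1 i).eq_or_lt with hi | hi
    · filter_upwards with ε
      simp [mulVec_add, mulVec_smul, hw i hi, hi]
    · have hcont : Continuous fun ε : ℝ ↦ (A *ᵥ (x + ε • w)) i := by
        simp only [mulVec_add, mulVec_smul, Pi.add_apply, Pi.smul_apply, smul_eq_mul]
        fun_prop
      have hi₀ : (A *ᵥ (x + (0 : ℝ) • w)) i < b i := by simpa using hi
      exact (hcont.tendsto 0 |>.eventually_lt_const hi₀).mono fun _ ↦ le_of_lt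
  obtain ⟨ε, hε, hball⟩ := Metric.eventually_nhds_iff.mp hmem
  have hplus : A *ᵥ (x + (ε / 2) • w) ≤ b := hball (by simp [abs_of_pos hε, hε])
  have hminus : A *ᵥ (x - (ε / 2) • w) ≤ b := by
    simpa [sub_eq_add_neg] using hball (y := -(ε / 2)) (by simp [abs_of_pos hε, hε])
  have hxw := hx.2 hminus hplus (mem_openSegment_sub_add x ((ε / 2) • w))
  simpa [hε.ne'] using hxw

variable [DecidableEq n]

theorem exists_det_submatrix_ne_zero_of_mem_extremePoints [Finite m] {A : Matrix m n ℤ} {b : m → ℤ}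
    {x : n → ℝ} (hx : x ∈ Set.extremePoints ℝ
      {x | A.map (Int.cast : ℤ → ℝ) *ᵥ x ≤ fun i ↦ (b i : ℝ)}) :
    ∃ r : n → m, (∀ j, (A.map (Int.cast : ℤ → ℝ) *ᵥ x) (r j) = b (r j)) ∧
      (A.submatrix r id).det ≠ 0 := by
  obtain ⟨r, hr, hdet⟩ := exists_det_submatrix_ne_zero fun w ↦ eq_zero_of_mem_extremePoints hx
  rw [submatrix_map, det_map_intCast, Int.cast_ne_zero] at hdet
  exact ⟨r, hr, hdet⟩

theorem isUnit_det_submatrix_of_isTotallyUnimodular {T : Matrix m n ℤ}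
    (hT : T.IsTotallyUnimodular) {r : n → m} (hr : (T.submatrix r id).det ≠ 0) :
    IsUnit (T.submatrix r id).det := by
  obtain ⟨s, hs⟩ := (isTotallyUnimodular_iff_fintype T).mp hT n r id
  rcases s with _ | _ | _
  · exact absurd hs.symm hr
  · exact hs ▸ isUnit_one.neg
  · exact hs ▸ isUnit_one

theorem exists_intCast_eq_of_isTotallyUnimodular {T : Matrix m n ℤ} (hT : T.IsTotallyUnimodular)
    {r : n → m} (hr : (T.submatrix r id).det ≠ 0) {x : n → ℝ} {b : m → ℤ}
    (hx : ∀ j, (T.map (Int.cast : ℤ → ℝ) *ᵥ x) (r j) = b (r j)) :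
    ∃ y : n → ℤ, x = fun j ↦ (y j : ℝ) := by
  set Q := T.submatrix r id
  have hQ : IsUnit Q.det := isUnit_det_submatrix_of_isTotallyUnimodular hT hr
  have hQx : Q.map (Int.cast : ℤ → ℝ) *ᵥ x = fun j ↦ (b (r j) : ℝ) := funext hx
  have hcramer := adjugate_mulVec_mulVec (Q.map (Int.cast : ℤ → ℝ)) x
  rw [hQx, adjugate_map_intCast, map_intCast_mulVec, det_map_intCast] at hcramer
  have hsq : (Q.det : ℝ) * Q.det = 1 := mod_cast Int.isUnit_mul_self hQ
  refine ⟨Q.det • (Q.adjugate *ᵥ (b ∘ r)), ?_⟩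
  rw [← one_smul ℝ x, ← hsq, mul_smul, ← hcramer]
  ext j
  simp [Function.comp_def]

end Vertex

section IntegerOptimum

variable {ι : Type*} [Fintype ι]

theorem finite_setOf_norm_sub_intCast_le (x : ι → ℝ) (ρ : ℝ) :
    {z : ι → ℤ | ‖x - fun i ↦ (z i : ℝ)‖ ≤ ρ}.Finite := by
  classical
  refine (Set.finite_Icc (fun i ↦ ⌈x i - ρ⌉) (fun i ↦ ⌊x i + ρ⌋)).subset fun z hz ↦ ?_
  have hi (i) := abs_le.mp ((norm_le_pi_norm _ i).trans hz)
  simp only [Pi.sub_apply] at hi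
  exact ⟨fun i ↦ Int.ceil_le.mpr (by linarith [hi i]),
    fun i ↦ Int.le_floor.mpr (by linarith [hi i])⟩

theorem exists_forall_le_norm_sub_le {S : Set (ι → ℤ)} (hS : S.Nonempty)
    (f : (ι → ℤ) → ℝ) {x : ι → ℝ} {ρ : ℝ}
    (h : ∀ w ∈ S, ∃ z ∈ S, f w ≤ f z ∧ ‖x - fun i ↦ (z i : ℝ)‖ ≤ ρ) :
    ∃ z ∈ S, (∀ w ∈ S, f w ≤ f z) ∧ ‖x - fun i ↦ (z i : ℝ)‖ ≤ ρ := by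
  obtain ⟨w, hw⟩ := hS
  obtain ⟨z₀, hz₀, -, hz₀ρ⟩ := h w hw
  obtain ⟨z, ⟨hz, hzρ⟩, hmax⟩ := Set.exists_max_image (S ∩ {z | ‖x - fun i ↦ (z i : ℝ)‖ ≤ ρ}) f
    ((finite_setOf_norm_sub_intCast_le x ρ).inter_of_right S) ⟨z₀, hz₀, hz₀ρ⟩
  refine ⟨z, hz, fun w hw ↦ ?_, hzρ⟩
  obtain ⟨z', hz', hwz', hz'ρ⟩ := h w hw
  exact hwz'.trans (hmax z' ⟨hz', hz'ρ⟩)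

end IntegerOptimum

section Proximity

variable {m n : ℕ} {T : Matrix (Fin m) (Fin (n + 1)) ℤ} {B : Matrix (Fin (n + 1)) (Fin (n + 1)) ℤ}
  {b : Fin m → ℤ} {x : Fin (n + 1) → ℝ}

theorem exists_le_dotProduct_norm_sub_le (hT : T.IsTotallyUnimodular)
    (hinj : Function.Injective (T.map (Int.cast : ℤ → ℝ)).mulVec) (hB : B.det ≠ 0)
    {y : Fin (n + 1) → ℤ} (hy : T *ᵥ y ≤ b)
    (hxy : B.map (Int.cast : ℤ → ℝ) *ᵥ x = fun i ↦ (y i : ℝ)) {c : Fin (n + 1) → ℝ}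
    (hopt : ∀ q : Fin (n + 1) → ℤ, T *ᵥ (y + B *ᵥ q) ≤ b → c ⬝ᵥ (fun i ↦ (q i : ℝ)) ≤ 0)
    {w : Fin (n + 1) → ℤ} (hw : (T * B) *ᵥ w ≤ b) :
    ∃ z : Fin (n + 1) → ℤ, (T * B) *ᵥ z ≤ b ∧
      c ⬝ᵥ (fun i ↦ (w i : ℝ)) ≤ c ⬝ᵥ (fun i ↦ (z i : ℝ)) ∧
      ‖x - fun i ↦ (z i : ℝ)‖ ≤ (1 - 1 / |(B.det : ℝ)|) * maxMinor (T * B) n := by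
  rw [← mulVec_mulVec] at hw
  obtain ⟨q, t, hyq, hwq, ht, hcard, htT⟩ := exists_feasible_exchange hT hinj hB hy hw
  have hdet : 0 < |(B.det : ℝ)| := abs_pos.mpr (Int.cast_ne_zero.mpr hB)
  have hcard' : (t.card : ℝ) ≤ |(B.det : ℝ)| - 1 := by
    rw [le_sub_iff_add_le, ← Int.cast_abs, Int.abs_eq_natAbs]
    exact_mod_cast hcard
  refine ⟨w - q, by rwa [← mulVec_mulVec], ?_, ?_⟩
  · have hcast : (fun i ↦ ((w - q) i : ℝ)) = (fun i ↦ (w i : ℝ)) - fun i ↦ (q i : ℝ) := by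
      ext i
      simp
    rw [hcast, dotProduct_sub]
    exact le_sub_self_iff _ |>.mpr (hopt q hyq)
  · have hD : 0 ≤ (1 - 1 / |(B.det : ℝ)|) * maxMinor (T * B) n := by
      rw [one_sub_div hdet.ne']
      have hsub : 0 ≤ |(B.det : ℝ)| - 1 := t.card.cast_nonneg.trans hcard'
      exact mul_nonneg (div_nonneg hsub hdet.le) (Nat.cast_nonneg _)
    refine (pi_norm_le_iff_of_nonneg hD).mpr fun k ↦ ?_
    rw [one_sub_div hdet.ne', div_mul_eq_mul_div, le_div_iff₀' hdet]
    exact (abs_det_mul_abs_sub_le hxy ht htT k).trans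
      (mul_le_mul_of_nonneg_right hcard' (Nat.cast_nonneg _))

theorem one_sub_one_div_mul_le_max_sub_one {K : Type*} [Field K] [LinearOrder K]
    [IsStrictOrderedRing K] {d D E : K} (hd : 1 ≤ d) (hE : d ≤ E) :
    (1 - 1 / d) * D ≤ max D E - 1 := by
  have hd₀ : 0 < d := one_pos.trans_le hd
  calc (1 - 1 / d) * D ≤ (1 - 1 / d) * max D E :=
        mul_le_mul_of_nonneg_left (le_max_left _ _) (sub_nonneg.mpr ((div_le_one hd₀).mpr hd))
    _ = max D E - max D E / d := by ring
    _ ≤ max D E - 1 := sub_le_sub_left ((one_le_div hd₀).mpr (hE.trans (le_max_right _ _))) _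

theorem one_sub_one_div_abs_det_mul_maxMinor_le (hx : x ∈ Set.extremePoints ℝ
      {x | (T * B).map (Int.cast : ℤ → ℝ) *ᵥ x ≤ fun i ↦ (b i : ℝ)}) :
    (1 - 1 / |(B.det : ℝ)|) * maxMinor (T * B) n ≤
      (max (maxMinor (T * B) n) (maxMinor (T * B) (n + 1)) : ℕ) - 1 := by
  obtain ⟨r, -, hr⟩ := exists_det_submatrix_ne_zero_of_mem_extremePoints hx
  have hB : B.det ≠ 0 := right_ne_zero_of_mul (det_mul_submatrix T B r ▸ hr)
  rw [← Int.cast_abs, Int.abs_eq_natAbs, Int.cast_natCast, Nat.cast_max]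
  exact one_sub_one_div_mul_le_max_sub_one (mod_cast Int.natAbs_pos.mpr hB)
    (mod_cast natAbs_det_le_maxMinor_mul hr)

theorem stmt12_general (hT : T.IsTotallyUnimodular) {c : Fin (n + 1) → ℝ}
    {P : Set (Fin (n + 1) → ℝ)}
    (hP : P = {x | (T * B).map (Int.cast : ℤ → ℝ) *ᵥ x ≤ fun i ↦ (b i : ℝ)})
    (hfeas : ∃ z : Fin (n + 1) → ℤ, (fun i ↦ (z i : ℝ)) ∈ P) (hx : x ∈ Set.extremePoints ℝ P)
    (hopt : ∀ x' ∈ P, c ⬝ᵥ x' ≤ c ⬝ᵥ x) :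
    ∃ z : Fin (n + 1) → ℤ, (fun i ↦ (z i : ℝ)) ∈ P ∧
      (∀ w : Fin (n + 1) → ℤ, (fun i ↦ (w i : ℝ)) ∈ P →
        c ⬝ᵥ (fun i ↦ (w i : ℝ)) ≤ c ⬝ᵥ (fun i ↦ (z i : ℝ))) ∧
      ‖x - fun i ↦ (z i : ℝ)‖ ≤ (1 - 1 / |(B.det : ℝ)|) * maxMinor (T * B) n := by
  subst hP
  simp only [Set.mem_ofPred_eq, map_intCast_mulVec_le_iff] at hfeas hopt ⊢
  obtain ⟨r, hr, hdet⟩ := exists_det_submatrix_ne_zero_of_mem_extremePoints hx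
  rw [det_mul_submatrix, mul_ne_zero_iff] at hdet
  have hinj : Function.Injective (T.map (Int.cast : ℤ → ℝ)).mulVec :=
    mulVec_injective_of_det_submatrix_ne_zero (r := r) <| by
      rw [submatrix_map, det_map_intCast]
      exact Int.cast_ne_zero.mpr hdet.1
  simp only [map_intCast_mul_mulVec] at hr
  obtain ⟨y, hxy⟩ := exists_intCast_eq_of_isTotallyUnimodular hT hdet.1 hr
  have hy : T *ᵥ y ≤ b := by
    rw [← map_intCast_mulVec_le_iff, ← hxy, ← map_intCast_mul_mulVec]
    exact hx.1
  refine exists_forall_le_norm_sub_le (S := {w | (T * B) *ᵥ w ≤ b}) hfeas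
    (fun z ↦ c ⬝ᵥ (fun i ↦ (z i : ℝ))) fun w hw ↦
    exists_le_dotProduct_norm_sub_le hT hinj hdet.2 hy hxy (fun q hq ↦ ?_) hw
  have hxq := hopt (x + fun i ↦ (q i : ℝ)) <| by
    have hcast : (fun i ↦ ((y + B *ᵥ q) i : ℝ)) =
        B.map (Int.cast : ℤ → ℝ) *ᵥ (x + fun i ↦ (q i : ℝ)) := by
      rw [mulVec_add, hxy, map_intCast_mulVec]
      ext i
      simp
    rwa [map_intCast_mul_mulVec, ← hcast, map_intCast_mulVec_le_iff]
  rwa [dotProduct_add, add_le_iff_nonpos_right] at hxq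

end Proximity

/-- Theorem 3, Part 1: proximity bound `max{Δ_{n−1}(A), Δ_n(A)} − 1` for
strictly Δ-modular `A = TB` and integral right-hand sides. -/
theorem stmt12 {m n : ℕ} (Δ : ℕ) (hΔ : 1 ≤ Δ) (hn : 2 ≤ n)
    (T : Matrix (Fin m) (Fin n) ℤ) (hT : T.IsTotallyUnimodular)
    (B : Matrix (Fin n) (Fin n) ℤ) (hB : B.det.natAbs = Δ)
    (A : Matrix (Fin m) (Fin n) ℤ) (hA : A = T * B)
    (b : Fin m → ℤ) (c : Fin n → ℚ)
    (P : Set (Fin n → ℝ))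
    (hP : P = {x | ∀ i, (A.map (Int.cast : ℤ → ℝ)).mulVec x i ≤ (b i : ℝ)})
    (hfeas : ∃ z : Fin n → ℤ, (fun i => (z i : ℝ)) ∈ P)
    (xs : Fin n → ℝ) (hxsP : xs ∈ P)
    (hvert : xs ∈ Set.extremePoints ℝ P)
    (hopt : ∀ x ∈ P, ∑ i, (c i : ℝ) * x i ≤ ∑ i, (c i : ℝ) * xs i) :
    ∃ z : Fin n → ℤ, (fun i => (z i : ℝ)) ∈ P ∧
      (∀ w : Fin n → ℤ, (fun i => (w i : ℝ)) ∈ P →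
        ∑ i, (c i : ℝ) * (w i : ℝ) ≤ ∑ i, (c i : ℝ) * (z i : ℝ)) ∧
      ‖(fun i => xs i - (z i : ℝ))‖ ≤
        ((max (maxMinor A (n - 1)) (maxMinor A n) : ℕ) : ℝ) - 1 := by
  obtain ⟨n, rfl⟩ := Nat.exists_eq_add_of_le' (one_le_two.trans hn)
  subst hA
  obtain ⟨z, hz, hmax, hnorm⟩ := stmt12_general hT hP hfeas hvert hopt
  exact ⟨z, hz, hmax, hnorm.trans (one_sub_one_div_abs_det_mul_maxMinor_le (hP ▸ hvert))⟩
end
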